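/- Let t = 2^i·ℓ + 1 where i ≥ 1 and ℓ ≥ 3 is odd, with ℓ dividing 2^i − 1 and ℓ ≠ 2^i − 1. If g_t(x,y) is irreducible in F_2[x,y], then g_t(x,y) is absolutely irreducible, i.e., irreducible over the algebraic closure of F_2. -/

import Mathlib

open MvPolynomial

/-!
Write `q = 2 ^ i`. If `g_t` is reducible over the algebraic closure, it is up to a unit the product
of `r ≥ 2` distinct Galois conjugates of a common degree `d`, so that `r d + 3 = q l + 1`.

The singular points of `f_t` are the `P = (x, y)` for which `x`, `y` and `x + y + 1` are `l`-th
roots of unity; for fixed `x ≠ 1` the involution `y ↦ x + y + 1` has no fixed points, so `y` takes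
an even number of values, less than `l`, and there are at most `l + (l - 1) ^ 2` such points. As
`l ∣ q - 1`, at each of them `f_t` has multiplicity `q + 1` and a squarefree tangent cone, so two
factors of `f_t` have no common tangent there. Two factors do not meet at infinity either, because
the homogeneous component of `f_t` of degree `q l` is coprime to every repeated factor of the
leading form.

Bezout's theorem then bounds `d ^ 2` by `∑ m_P(p) m_P(p')` for any two conjugates `p ≠ p'`. Summing
over all pairs and using the Cauchy-Schwarz inequality yields
`(q l - 2) ^ 2 ≤ (l + (l - 1) ^ 2) (q + 1) ^ 2`, which is false for `q ≥ 3 l + 1`.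
-/

section HomogeneousComponents

open Finset.HasAntidiagonal (antidiagonal mem_antidiagonal)

variable {σ R : Type*} [CommSemiring R]

theorem homogeneousComponent_mul_eq_sum_antidiagonal (n : ℕ) (p q : MvPolynomial σ R) :
    homogeneousComponent n (p * q) = ∑ ij ∈ antidiagonal n,
      homogeneousComponent ij.1 p * homogeneousComponent ij.2 q := by
  classical
  ext s
  simp only [coeff_homogeneousComponent, coeff_sum, coeff_mul, ite_mul, mul_ite, zero_mul, mul_zero]
  rw [Finset.sum_comm]
  split_ifs with hs
  · refine Finset.sum_congr rfl fun x hx => ?_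
    rw [mem_antidiagonal] at hx
    rw [Finset.sum_eq_single (x.1.degree, x.2.degree)]
    · simp
    · rintro ⟨i, j⟩ - hij
      grind
    · intro h
      exact absurd (mem_antidiagonal.2 (by rw [← map_add, hx, hs])) h
  · symm
    refine Finset.sum_eq_zero fun x hx => Finset.sum_eq_zero fun ij hij => ?_
    rw [mem_antidiagonal] at hx hij
    have : x.1.degree + x.2.degree = s.degree := by rw [← map_add, hx]
    grind

theorem homogeneousComponent_add_mul_of_lt {a b : ℕ} {p q : MvPolynomial σ R}
    (hp : ∀ i < a, homogeneousComponent i p = 0) (hq : ∀ j < b, homogeneousComponent j q = 0) :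
    homogeneousComponent (a + b) (p * q) =
      homogeneousComponent a p * homogeneousComponent b q := by
  rw [homogeneousComponent_mul_eq_sum_antidiagonal, Finset.sum_eq_single (a, b)]
  · rintro ⟨i, j⟩ hij hne
    rw [mem_antidiagonal] at hij
    rcases lt_or_ge i a with hi | hi
    · simp [hp i hi]
    · simp [hq j (by grind)]
  · simp

theorem homogeneousComponent_add_mul_of_gt {a b : ℕ} {p q : MvPolynomial σ R}
    (hp : ∀ i > a, homogeneousComponent i p = 0) (hq : ∀ j > b, homogeneousComponent j q = 0) :
    homogeneousComponent (a + b) (p * q) =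
      homogeneousComponent a p * homogeneousComponent b q := by
  rw [homogeneousComponent_mul_eq_sum_antidiagonal, Finset.sum_eq_single (a, b)]
  · rintro ⟨i, j⟩ hij hne
    rw [mem_antidiagonal] at hij
    rcases lt_or_ge a i with hi | hi
    · simp [hp i hi]
    · simp [hq j (by grind)]
  · simp

theorem eq_zero_iff_forall_homogeneousComponent_eq_zero {p : MvPolynomial σ R} :
    p = 0 ↔ ∀ n, homogeneousComponent n p = 0 := by
  refine ⟨by rintro rfl; simp, fun h => ?_⟩
  rw [← sum_homogeneousComponent p]
  exact Finset.sum_eq_zero fun n _ => h n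

theorem homogeneousComponent_eq_zero_iff_forall_coeff {n : ℕ} {p : MvPolynomial σ R} :
    homogeneousComponent n p = 0 ↔ ∀ s : σ →₀ ℕ, s.degree = n → coeff s p = 0 := by
  simp only [MvPolynomial.ext_iff, coeff_homogeneousComponent, coeff_zero, ite_eq_right_iff]

end HomogeneousComponents

section ExtremeForms

section CommSemiring

variable {σ R : Type*} [CommSemiring R]

theorem mem_idealOfVars_pow_iff {n : ℕ} {p : MvPolynomial σ R} :
    p ∈ idealOfVars σ R ^ n ↔ ∀ m < n, homogeneousComponent m p = 0 := by
  simp only [mem_pow_idealOfVars_iff', homogeneousComponent_eq_zero_iff_forall_coeff]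
  grind

variable (σ R) in
/-- The submodule of polynomials of total degree less than `n`, the zero polynomial included. -/
noncomputable def totalDegreeLT (n : ℕ) : Submodule R (MvPolynomial σ R) :=
  restrictSupport R {s | s.degree < n}

theorem mem_totalDegreeLT_iff {n : ℕ} {p : MvPolynomial σ R} :
    p ∈ totalDegreeLT σ R n ↔ ∀ m, n ≤ m → homogeneousComponent m p = 0 := by
  simp only [homogeneousComponent_eq_zero_iff_forall_coeff]
  change (∀ s ∈ p.support, s.degree < n) ↔ _
  simp only [mem_support_iff]
  grind

theorem totalDegreeLT_mono {m n : ℕ} (hmn : m ≤ n) : totalDegreeLT σ R m ≤ totalDegreeLT σ R n :=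
  fun _ hp => mem_totalDegreeLT_iff.2 fun j hj => mem_totalDegreeLT_iff.1 hp j (hmn.trans hj)

/-- The homogeneous component of highest degree of `p`: the equation, on the line at infinity, of
the points at infinity of the curve `p = 0`. -/
noncomputable def topForm (p : MvPolynomial σ R) : MvPolynomial σ R :=
  homogeneousComponent p.totalDegree p

/-- The lowest degree in which `p` has a nonzero homogeneous component, that is, the multiplicity
of `p` at the origin. The zero polynomial gets the value `0`. -/
noncomputable def initialDegree (p : MvPolynomial σ R) : ℕ :=
  sInf {n | homogeneousComponent n p ≠ 0}

/-- The homogeneous component of lowest degree of `p`: the equation of its tangent cone at the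
origin. -/
noncomputable def initialForm (p : MvPolynomial σ R) : MvPolynomial σ R :=
  homogeneousComponent (initialDegree p) p

theorem topForm_isHomogeneous (p : MvPolynomial σ R) : (topForm p).IsHomogeneous p.totalDegree :=
  homogeneousComponent_isHomogeneous _ _

theorem initialForm_isHomogeneous (p : MvPolynomial σ R) :
    (initialForm p).IsHomogeneous (initialDegree p) :=
  homogeneousComponent_isHomogeneous _ _

theorem homogeneousComponent_eq_zero_of_lt_initialDegree {n : ℕ} {p : MvPolynomial σ R}
    (hn : n < initialDegree p) : homogeneousComponent n p = 0 :=
  not_not.1 (Nat.notMem_of_lt_sInf hn)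

theorem topForm_ne_zero {p : MvPolynomial σ R} (hp : p ≠ 0) : topForm p ≠ 0 := by
  obtain ⟨s, hs, hdeg⟩ := Finset.exists_mem_eq_sup p.support (support_nonempty.2 hp)
    fun s => s.degree
  exact fun h => mem_support_iff.1 hs
    (homogeneousComponent_eq_zero_iff_forall_coeff.1 h s hdeg.symm)

theorem initialForm_ne_zero {p : MvPolynomial σ R} (hp : p ≠ 0) : initialForm p ≠ 0 := by
  rw [Ne, eq_zero_iff_forall_homogeneousComponent_eq_zero, not_forall] at hp
  exact Nat.sInf_mem hp

theorem mem_idealOfVars_pow_initialDegree (p : MvPolynomial σ R) :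
    p ∈ idealOfVars σ R ^ initialDegree p :=
  mem_idealOfVars_pow_iff.2 fun _ => homogeneousComponent_eq_zero_of_lt_initialDegree

theorem mem_totalDegreeLT_iff_totalDegree_lt {n : ℕ} {p : MvPolynomial σ R} (hp : p ≠ 0) :
    p ∈ totalDegreeLT σ R n ↔ p.totalDegree < n := by
  refine ⟨fun h => ?_, fun h => mem_totalDegreeLT_iff.2 fun m hm =>
    homogeneousComponent_eq_zero m p (h.trans_le hm)⟩
  by_contra! hle
  exact topForm_ne_zero hp (mem_totalDegreeLT_iff.1 h _ hle)

theorem initialDegree_eq_of_lt {n : ℕ} {p : MvPolynomial σ R}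
    (hlt : ∀ m < n, homogeneousComponent m p = 0) (hn : homogeneousComponent n p ≠ 0) :
    initialDegree p = n := by
  refine le_antisymm (Nat.sInf_le hn) (le_of_not_gt fun h => ?_)
  exact Nat.sInf_mem (s := {n | homogeneousComponent n p ≠ 0}) ⟨n, hn⟩ (hlt _ h)

theorem totalDegree_eq_of_gt {n : ℕ} {p : MvPolynomial σ R}
    (hgt : ∀ m > n, homogeneousComponent m p = 0) (hn : homogeneousComponent n p ≠ 0) :
    p.totalDegree = n := by
  have hp : p ≠ 0 := by rintro rfl; simp at hn
  refine le_antisymm (le_of_not_gt fun h => topForm_ne_zero hp (hgt _ h)) (le_of_not_gt fun h => ?_)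
  exact hn (homogeneousComponent_eq_zero n p h)

theorem initialDegree_le_totalDegree (p : MvPolynomial σ R) : initialDegree p ≤ p.totalDegree := by
  rcases eq_or_ne p 0 with rfl | hp
  · simp [initialDegree]
  by_contra! hlt
  exact topForm_ne_zero hp (homogeneousComponent_eq_zero_of_lt_initialDegree hlt)

theorem topForm_topForm (p : MvPolynomial σ R) : topForm (topForm p) = topForm p := by
  rcases eq_or_ne p 0 with rfl | hp
  · simp [topForm]
  rw [topForm, (topForm_isHomogeneous p).totalDegree (topForm_ne_zero hp),
    homogeneousComponent_of_mem (topForm_isHomogeneous p), if_pos rfl]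

theorem totalDegree_topForm (p : MvPolynomial σ R) : (topForm p).totalDegree = p.totalDegree := by
  rcases eq_or_ne p 0 with rfl | hp
  · simp [topForm]
  exact (topForm_isHomogeneous p).totalDegree (topForm_ne_zero hp)

theorem initialDegree_eq_of_isHomogeneous {T : MvPolynomial σ R} {n : ℕ}
    (hT : T.IsHomogeneous n) (hT0 : T ≠ 0) : initialDegree T = n := by
  refine initialDegree_eq_of_lt (fun m hm => ?_) ?_
  · rw [homogeneousComponent_of_mem hT, if_neg hm.ne]
  · rwa [homogeneousComponent_of_mem hT, if_pos rfl]

theorem initialForm_eq_of_isHomogeneous {T : MvPolynomial σ R} {n : ℕ}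
    (hT : T.IsHomogeneous n) : initialForm T = T := by
  rcases eq_or_ne T 0 with rfl | hT0
  · simp [initialForm]
  · rw [initialForm, initialDegree_eq_of_isHomogeneous hT hT0, homogeneousComponent_of_mem hT,
      if_pos rfl]

theorem homogeneousSubmodule_le_totalDegreeLT {m n : ℕ} (hmn : m < n) :
    homogeneousSubmodule σ R m ≤ totalDegreeLT σ R n := by
  intro p hp
  refine mem_totalDegreeLT_iff.2 fun j hj => ?_
  rw [homogeneousComponent_of_mem hp, if_neg (by omega)]

end CommSemiring

section NoZeroDivisors

variable {σ R : Type*} [CommSemiring R] [NoZeroDivisors R] {p q : MvPolynomial σ R}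

theorem topForm_mul (p q : MvPolynomial σ R) : topForm (p * q) = topForm p * topForm q := by
  rcases eq_or_ne p 0 with rfl | hp
  · simp [topForm]
  rcases eq_or_ne q 0 with rfl | hq
  · simp [topForm]
  rw [topForm, totalDegree_mul_of_isDomain hp hq]
  exact homogeneousComponent_add_mul_of_gt (fun i hi => homogeneousComponent_eq_zero i _ hi)
    fun j hj => homogeneousComponent_eq_zero j _ hj

theorem initialDegree_mul (hp : p ≠ 0) (hq : q ≠ 0) :
    initialDegree (p * q) = initialDegree p + initialDegree q := by
  refine initialDegree_eq_of_lt (fun m hm => mem_idealOfVars_pow_iff.1 ?_ m hm) ?_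
  · rw [pow_add]
    exact Ideal.mul_mem_mul (mem_idealOfVars_pow_initialDegree p)
      (mem_idealOfVars_pow_initialDegree q)
  · rw [homogeneousComponent_add_mul_of_lt
      (fun i hi => homogeneousComponent_eq_zero_of_lt_initialDegree hi)
      fun j hj => homogeneousComponent_eq_zero_of_lt_initialDegree hj]
    exact mul_ne_zero (initialForm_ne_zero hp) (initialForm_ne_zero hq)

theorem initialForm_mul (p q : MvPolynomial σ R) :
    initialForm (p * q) = initialForm p * initialForm q := by
  rcases eq_or_ne p 0 with rfl | hp
  · simp [initialForm]
  rcases eq_or_ne q 0 with rfl | hq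
  · simp [initialForm]
  rw [initialForm, initialDegree_mul hp hq]
  exact homogeneousComponent_add_mul_of_lt
    (fun i hi => homogeneousComponent_eq_zero_of_lt_initialDegree hi)
    fun j hj => homogeneousComponent_eq_zero_of_lt_initialDegree hj

end NoZeroDivisors

section CommRing

variable {σ R : Type*} [CommRing R] {p q : MvPolynomial σ R}

theorem initialDegree_eq_and_initialForm_eq_of_sub_mem (hp : p ≠ 0)
    (hqp : q - p ∈ idealOfVars σ R ^ (initialDegree p + 1)) :
    initialDegree q = initialDegree p ∧ initialForm q = initialForm p := by
  have hcomp : ∀ m ≤ initialDegree p, homogeneousComponent m q = homogeneousComponent m p :=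
    fun m hm => sub_eq_zero.1 ((map_sub _ _ _).symm.trans
      (mem_idealOfVars_pow_iff.1 hqp m (Nat.lt_succ_of_le hm)))
  have hdeg : initialDegree q = initialDegree p := by
    refine initialDegree_eq_of_lt (fun m hm => ?_) ?_
    · rw [hcomp m hm.le, homogeneousComponent_eq_zero_of_lt_initialDegree hm]
    · rw [hcomp _ le_rfl]
      exact initialForm_ne_zero hp
  exact ⟨hdeg, by rw [initialForm, hdeg, hcomp _ le_rfl, initialForm]⟩

theorem sub_mem_totalDegreeLT_of_topForm_eq (hdeg : q.totalDegree = p.totalDegree)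
    (htop : topForm q = topForm p) : p - q ∈ totalDegreeLT σ R p.totalDegree := by
  refine mem_totalDegreeLT_iff.2 fun m hm => ?_
  rw [map_sub, sub_eq_zero]
  rcases hm.eq_or_lt with rfl | hm
  · rw [topForm, topForm, hdeg] at htop
    exact htop.symm
  · rw [homogeneousComponent_eq_zero _ _ hm, homogeneousComponent_eq_zero _ _ (hdeg ▸ hm)]

theorem topForm_eq_of_sub_mem_totalDegreeLT (hqp : q - p ∈ totalDegreeLT σ R p.totalDegree)
    (hp : p ≠ 0) : q.totalDegree = p.totalDegree ∧ topForm q = topForm p := by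
  have hcomp : ∀ m ≥ p.totalDegree, homogeneousComponent m q = homogeneousComponent m p :=
    fun m hm => sub_eq_zero.1 ((map_sub _ _ _).symm.trans (mem_totalDegreeLT_iff.1 hqp m hm))
  have hdeg : q.totalDegree = p.totalDegree := by
    refine totalDegree_eq_of_gt (fun m hm => ?_) ?_
    · rw [hcomp m hm.le, homogeneousComponent_eq_zero m p hm]
    · rw [hcomp _ le_rfl]
      exact topForm_ne_zero hp
  exact ⟨hdeg, by rw [topForm, hdeg, hcomp _ le_rfl, topForm]⟩

end CommRing

end ExtremeForms

section Syzygies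

variable {σ K : Type*} [Field K] {h k r s : MvPolynomial σ K}

theorem initialDegree_le_of_initialForm_dvd (hr : r ≠ 0) (hdvd : initialForm k ∣ initialForm r) :
    initialDegree k ≤ initialDegree r := by
  have hr' := initialForm_ne_zero hr
  have := totalDegree_le_of_dvd_of_isDomain hdvd hr'
  rwa [(initialForm_isHomogeneous k).totalDegree (ne_zero_of_dvd_ne_zero hr' hdvd),
    (initialForm_isHomogeneous r).totalDegree hr'] at this

theorem left_eq_zero_of_mul_add_mul_mem (hh : h ≠ 0)
    (hcoprime : IsRelPrime (initialForm h) (initialForm k))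
    (hr : r ∈ totalDegreeLT σ K (initialDegree k))
    (hmem : r * h + s * k ∈ idealOfVars σ K ^ (initialDegree h + initialDegree k)) : r = 0 := by
  by_contra hr0
  have hlt : initialDegree r < initialDegree k :=
    (initialDegree_le_totalDegree r).trans_lt ((mem_totalDegreeLT_iff_totalDegree_lt hr0).1 hr)
  have hcancel : initialForm (-s * k) = initialForm (r * h) := by
    refine (initialDegree_eq_and_initialForm_eq_of_sub_mem (mul_ne_zero hr0 hh) ?_).2
    rw [initialDegree_mul hr0 hh, show -s * k - r * h = -(r * h + s * k) by ring]
    exact neg_mem (Ideal.pow_le_pow_right (by omega) hmem)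
  rw [initialForm_mul, initialForm_mul] at hcancel
  have hdvd : initialForm k ∣ initialForm r :=
    hcoprime.symm.dvd_of_dvd_mul_right (hcancel ▸ dvd_mul_left _ _)
  exact hlt.not_ge (initialDegree_le_of_initialForm_dvd hr0 hdvd)

theorem eq_zero_and_eq_zero_of_mul_add_mul_mem (hh : h ≠ 0) (hk : k ≠ 0)
    (hcoprime : IsRelPrime (initialForm h) (initialForm k))
    (hr : r ∈ totalDegreeLT σ K (initialDegree k)) (hs : s ∈ totalDegreeLT σ K (initialDegree h))
    (hmem : r * h + s * k ∈ idealOfVars σ K ^ (initialDegree h + initialDegree k)) :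
    r = 0 ∧ s = 0 :=
  ⟨left_eq_zero_of_mul_add_mul_mem hh hcoprime hr hmem,
    left_eq_zero_of_mul_add_mul_mem hk hcoprime.symm hs
      (by rwa [add_comm (s * k), add_comm (initialDegree k)])⟩

theorem topForm_dvd_topForm_of_mul_add_mul_mem (hr : r ≠ 0) (hh : h ≠ 0)
    (hcoprime : IsRelPrime (topForm h) (topForm k))
    (hmem : r * h + s * k ∈ totalDegreeLT σ K (r.totalDegree + h.totalDegree)) :
    topForm k ∣ topForm r := by
  have hcancel : topForm (-s * k) = topForm (r * h) := by
    refine (topForm_eq_of_sub_mem_totalDegreeLT ?_ (mul_ne_zero hr hh)).2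
    rw [totalDegree_mul_of_isDomain hr hh, show -s * k - r * h = -(r * h + s * k) by ring]
    exact neg_mem hmem
  rw [topForm_mul, topForm_mul] at hcancel
  exact hcoprime.symm.dvd_of_dvd_mul_right (hcancel ▸ dvd_mul_left _ _)

theorem exists_sub_mul_mem_totalDegreeLT (hr : r ≠ 0) (hdvd : topForm k ∣ topForm r) :
    ∃ c, r - c * k ∈ totalDegreeLT σ K r.totalDegree := by
  obtain ⟨c, hc⟩ := hdvd
  have hck : topForm k ≠ 0 ∧ c ≠ 0 := mul_ne_zero_iff.1 (hc ▸ topForm_ne_zero hr)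
  refine ⟨c, sub_mem_totalDegreeLT_of_topForm_eq ?_ ?_⟩
  · have hk : k ≠ 0 := by rintro rfl; simp [topForm] at hck
    rw [← totalDegree_topForm r, hc, totalDegree_mul_of_isDomain hck.1 hck.2,
      totalDegree_topForm, totalDegree_mul_of_isDomain hck.2 hk, add_comm]
  · rw [← topForm_topForm r, hc, topForm_mul, topForm_mul, topForm_topForm, mul_comm]

/-- Division with remainder: as long as `r` is too large, its top form is divisible by that of `k`,
so a multiple of `k` can be subtracted from `r` to lower its degree. -/
theorem exists_left_mem_totalDegreeLT (hh : h ≠ 0)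
    (hcoprime : IsRelPrime (topForm h) (topForm k))
    (hmem : r * h + s * k ∈ totalDegreeLT σ K (h.totalDegree + k.totalDegree - 1)) :
    ∃ r' ∈ totalDegreeLT σ K (k.totalDegree - 1), ∃ s', r' * h + s' * k = r * h + s * k := by
  induction hn : r.totalDegree using Nat.strong_induction_on generalizing r s with
  | _ n ih =>
    by_cases hr : r ∈ totalDegreeLT σ K (k.totalDegree - 1)
    · exact ⟨r, hr, s, rfl⟩
    have hr0 : r ≠ 0 := by rintro rfl; exact hr (zero_mem _)
    have hle : k.totalDegree - 1 ≤ r.totalDegree :=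
      not_lt.1 fun hlt => hr ((mem_totalDegreeLT_iff_totalDegree_lt hr0).2 hlt)
    obtain ⟨c, hc⟩ := exists_sub_mul_mem_totalDegreeLT hr0
      (topForm_dvd_topForm_of_mul_add_mul_mem hr0 hh hcoprime
        (totalDegreeLT_mono (by omega) hmem))
    have hmove : (r - c * k) * h + (s + c * h) * k = r * h + s * k := by ring
    rcases eq_or_ne (r - c * k) 0 with hzero | hne
    · exact ⟨0, zero_mem _, s + c * h, by rw [← hmove, hzero]⟩
    have hlt := (mem_totalDegreeLT_iff_totalDegree_lt hne).1 hc
    obtain ⟨r', hr', s', hrs⟩ := ih _ (hn ▸ hlt) (hmove ▸ hmem) rfl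
    exact ⟨r', hr', s', hrs.trans hmove⟩

theorem mul_mem_totalDegreeLT_pred {m n : ℕ} (hr : r ∈ totalDegreeLT σ K (m - 1))
    (hh : h.totalDegree ≤ n) : r * h ∈ totalDegreeLT σ K (n + m - 1) := by
  rcases eq_or_ne r 0 with rfl | hr0
  · simp
  rcases eq_or_ne h 0 with rfl | hh0
  · simp
  rw [mem_totalDegreeLT_iff_totalDegree_lt hr0] at hr
  rw [mem_totalDegreeLT_iff_totalDegree_lt (mul_ne_zero hr0 hh0),
    totalDegree_mul_of_isDomain hr0 hh0]
  omega

theorem exists_mem_totalDegreeLT_of_mem_span_pair (hh : h ≠ 0) (hk : k ≠ 0)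
    (hcoprime : IsRelPrime (topForm h) (topForm k)) {F : MvPolynomial σ K}
    (hF : F ∈ Ideal.span {h, k})
    (hdeg : F ∈ totalDegreeLT σ K (h.totalDegree + k.totalDegree - 1)) :
    ∃ r ∈ totalDegreeLT σ K (k.totalDegree - 1), ∃ s ∈ totalDegreeLT σ K (h.totalDegree - 1),
      r * h + s * k = F := by
  obtain ⟨r₀, s₀, rfl⟩ := Ideal.mem_span_pair.1 hF
  obtain ⟨r, hr, s, hrs⟩ := exists_left_mem_totalDegreeLT hh hcoprime hdeg
  refine ⟨r, hr, s, ?_, hrs⟩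
  rcases eq_or_ne s 0 with rfl | hs
  · exact zero_mem _
  have hsk : s * k ∈ totalDegreeLT σ K (h.totalDegree + k.totalDegree - 1) := by
    rw [← hrs] at hdeg
    exact (Submodule.add_mem_iff_right _ (mul_mem_totalDegreeLT_pred hr le_rfl)).1 hdeg
  rw [mem_totalDegreeLT_iff_totalDegree_lt (mul_ne_zero hs hk),
    totalDegree_mul_of_isDomain hs hk] at hsk
  rw [mem_totalDegreeLT_iff_totalDegree_lt hs]
  omega

end Syzygies

section Dimension

variable {K : Type*} [Field K]

theorem finrank_restrictSupport {σ : Type*} (s : Set (σ →₀ ℕ)) :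
    Module.finrank K (restrictSupport K s) = s.ncard :=
  Module.finrank_eq_nat_card_basis (basisRestrictSupport K s)

theorem setOf_degree_eq_coe_finsuppAntidiag (n : ℕ) : {s : Fin 2 →₀ ℕ | s.degree = n} =
    Finset.finsuppAntidiag (Finset.univ : Finset (Fin 2)) n := by
  ext s
  simp [Finsupp.degree_eq_sum]

theorem ncard_setOf_degree_eq (n : ℕ) : {s : Fin 2 →₀ ℕ | s.degree = n}.ncard = n + 1 := by
  rw [setOf_degree_eq_coe_finsuppAntidiag, Set.ncard_coe_finset,
    Finset.card_finsuppAntidiag_nat_eq_choose, Finset.card_univ, Fintype.card_fin,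
    show 2 + n - 1 = n + 1 by omega, Nat.choose_succ_self_right]

theorem setOf_degree_lt_succ (n : ℕ) : {s : Fin 2 →₀ ℕ | s.degree < n + 1} =
    {s | s.degree < n} ∪ {s | s.degree = n} := by
  ext s
  simp [le_iff_lt_or_eq]

theorem finite_setOf_degree_lt (n : ℕ) : {s : Fin 2 →₀ ℕ | s.degree < n}.Finite := by
  induction n with
  | zero => simp
  | succ n ih =>
    rw [setOf_degree_lt_succ, setOf_degree_eq_coe_finsuppAntidiag]
    exact ih.union (Finset.finite_toSet _)

theorem two_mul_ncard_setOf_degree_lt (n : ℕ) :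
    2 * {s : Fin 2 →₀ ℕ | s.degree < n}.ncard = n * (n + 1) := by
  induction n with
  | zero => simp
  | succ n ih =>
    have hdisj : Disjoint {s : Fin 2 →₀ ℕ | s.degree < n} {s | s.degree = n} :=
      Set.disjoint_left.2 fun _ hlt heq => hlt.ne heq
    rw [setOf_degree_lt_succ, Set.ncard_union_eq hdisj (finite_setOf_degree_lt n)
      (setOf_degree_eq_coe_finsuppAntidiag n ▸ Finset.finite_toSet _), ncard_setOf_degree_eq,
      mul_add, ih]
    ring

instance (n : ℕ) : FiniteDimensional K (totalDegreeLT (Fin 2) K n) :=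
  have := (finite_setOf_degree_lt n).to_subtype
  Module.Finite.of_basis (basisRestrictSupport K {s : Fin 2 →₀ ℕ | s.degree < n})

theorem two_mul_finrank_totalDegreeLT (n : ℕ) :
    2 * Module.finrank K (totalDegreeLT (Fin 2) K n) = n * (n + 1) := by
  rw [totalDegreeLT, finrank_restrictSupport, two_mul_ncard_setOf_degree_lt]

theorem finrank_homogeneousSubmodule (n : ℕ) :
    Module.finrank K (homogeneousSubmodule (Fin 2) K n) = n + 1 := by
  rw [homogeneousSubmodule_eq_finsupp_supported]
  exact (finrank_restrictSupport _).trans (ncard_setOf_degree_eq n)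

instance (n : ℕ) : FiniteDimensional K (homogeneousSubmodule (Fin 2) K n) :=
  Module.finite_of_finrank_pos (by rw [finrank_homogeneousSubmodule]; omega)

theorem exists_sub_mem_idealOfVars_pow {σ : Type*} (n : ℕ) (p : MvPolynomial σ K) :
    ∃ v ∈ totalDegreeLT σ K n, p - v ∈ idealOfVars σ K ^ n := by
  refine ⟨∑ i ∈ Finset.range n, homogeneousComponent i p, Submodule.sum_mem _ fun i hi => ?_, ?_⟩
  · refine mem_totalDegreeLT_iff.2 fun m hm => ?_
    rw [homogeneousComponent_of_mem (homogeneousComponent_isHomogeneous i p), if_neg]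
    grind
  · rw [mem_pow_idealOfVars_iff']
    intro s hs
    simp [coeff_sum, coeff_homogeneousComponent, hs]

theorem surjective_mkQ_comp_subtype_totalDegreeLT (n : ℕ) : Function.Surjective
    (((idealOfVars (Fin 2) K ^ n).restrictScalars K).mkQ ∘ₗ
      (totalDegreeLT (Fin 2) K n).subtype) := by
  intro x
  obtain ⟨p, rfl⟩ := Submodule.mkQ_surjective _ x
  obtain ⟨v, hv, hpv⟩ := exists_sub_mem_idealOfVars_pow n p
  exact ⟨⟨v, hv⟩, ((Submodule.Quotient.eq _).2 hpv).symm⟩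

instance (n : ℕ) : FiniteDimensional K
    (MvPolynomial (Fin 2) K ⧸ (idealOfVars (Fin 2) K ^ n).restrictScalars K) :=
  Module.Finite.of_surjective _ (surjective_mkQ_comp_subtype_totalDegreeLT n)

theorem finrank_quotient_idealOfVars_pow_le (n : ℕ) : Module.finrank K
    (MvPolynomial (Fin 2) K ⧸ (idealOfVars (Fin 2) K ^ n).restrictScalars K) ≤
      Module.finrank K (totalDegreeLT (Fin 2) K n) :=
  LinearMap.finrank_le_finrank_of_surjective (surjective_mkQ_comp_subtype_totalDegreeLT n)

end Dimension

section LinearAlgebra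

variable {K V M : Type*} [Field K] [AddCommGroup V] [Module K V] [AddCommGroup M] [Module K M]

theorem finrank_quotient_sup_range_add_finrank (W : Submodule K M) [FiniteDimensional K (M ⧸ W)]
    {L : V →ₗ[K] M} (hL : Function.Injective (W.mkQ ∘ₗ L)) :
    Module.finrank K (M ⧸ W ⊔ LinearMap.range L) + Module.finrank K V =
      Module.finrank K (M ⧸ W) := by
  have hmap : (W ⊔ LinearMap.range L).map W.mkQ = LinearMap.range (W.mkQ ∘ₗ L) := by
    rw [Submodule.map_sup, Submodule.mkQ_map_self, bot_sup_eq, LinearMap.range_comp]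
  rw [← (Submodule.quotientQuotientEquivQuotient W _ le_sup_left).finrank_eq, hmap,
    ← LinearMap.finrank_range_of_inj hL]
  exact Submodule.finrank_quotient_add_finrank _

theorem finrank_le_finrank_inf_add_sum [FiniteDimensional K V] {ι : Type*} (s : Finset ι)
    (L : V →ₗ[K] M) (J : ι → Submodule K M) [∀ i, FiniteDimensional K (M ⧸ J i)] :
    Module.finrank K V ≤ Module.finrank K (Submodule.comap L (⨅ i ∈ s, J i)) +
      ∑ i ∈ s, Module.finrank K (M ⧸ J i) := by
  let φ : V →ₗ[K] ∀ i : s, M ⧸ J i := LinearMap.pi fun i => (J i).mkQ ∘ₗ L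
  have hker : LinearMap.ker φ = Submodule.comap L (⨅ i ∈ s, J i) := by
    ext v
    simp [φ, LinearMap.mem_ker, funext_iff]
  rw [← hker, ← LinearMap.finrank_range_add_finrank_ker φ, add_comm, ← Finset.sum_coe_sort s,
    ← Module.finrank_pi_fintype]
  exact Nat.add_le_add_left (Submodule.finrank_le _) _

end LinearAlgebra

section LocalIntersection

variable {K : Type*} [Field K]

/-- The map `(r, s) ↦ r * h + s * k` on `A × B`, with values in the ideal generated by `h`, `k`. -/
noncomputable def pairMap {σ : Type*} (h k : MvPolynomial σ K)
    (A B : Submodule K (MvPolynomial σ K)) : A × B →ₗ[K] MvPolynomial σ K :=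
  (LinearMap.mulRight K h ∘ₗ A.subtype).coprod (LinearMap.mulRight K k ∘ₗ B.subtype)

theorem pairMap_apply {σ : Type*} (h k : MvPolynomial σ K)
    (A B : Submodule K (MvPolynomial σ K)) (x : A × B) :
    pairMap h k A B x = x.1 * h + x.2 * k := by
  simp [pairMap]

theorem range_pairMap_le {σ : Type*} (h k : MvPolynomial σ K)
    (A B : Submodule K (MvPolynomial σ K)) :
    LinearMap.range (pairMap h k A B) ≤ (Ideal.span {h, k}).restrictScalars K := by
  rintro _ ⟨x, rfl⟩
  exact Ideal.mem_span_pair.2 ⟨x.1, x.2, (pairMap_apply h k A B x).symm⟩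

variable {h k : MvPolynomial (Fin 2) K}

theorem injective_mkQ_comp_pairMap {σ : Type*} {h k : MvPolynomial σ K} (hh : h ≠ 0) (hk : k ≠ 0)
    (hcoprime : IsRelPrime (initialForm h) (initialForm k)) :
    Function.Injective
      (((idealOfVars σ K ^ (initialDegree h + initialDegree k)).restrictScalars K).mkQ ∘ₗ
        pairMap h k (totalDegreeLT σ K (initialDegree k))
          (totalDegreeLT σ K (initialDegree h))) := by
  refine (injective_iff_map_eq_zero _).2 fun x hx => ?_
  rw [LinearMap.comp_apply, pairMap_apply] at hx
  obtain ⟨hr, hs⟩ := eq_zero_and_eq_zero_of_mul_add_mul_mem hh hk hcoprime x.1.2 x.2.2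
    ((Submodule.Quotient.mk_eq_zero _).1 hx)
  exact Prod.ext (Subtype.ext hr) (Subtype.ext hs)

theorem finrank_quotient_sup_range_pairMap_le (hh : h ≠ 0) (hk : k ≠ 0)
    (hcoprime : IsRelPrime (initialForm h) (initialForm k)) :
    Module.finrank K (MvPolynomial (Fin 2) K ⧸
      (idealOfVars (Fin 2) K ^ (initialDegree h + initialDegree k)).restrictScalars K ⊔
        LinearMap.range (pairMap h k (totalDegreeLT (Fin 2) K (initialDegree k))
          (totalDegreeLT (Fin 2) K (initialDegree h)))) ≤
      initialDegree h * initialDegree k := by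
  have hsum := finrank_quotient_sup_range_add_finrank _ (injective_mkQ_comp_pairMap hh hk hcoprime)
  have hle := finrank_quotient_idealOfVars_pow_le (K := K) (initialDegree h + initialDegree k)
  rw [← hsum, Module.finrank_prod] at hle
  have dim_h := two_mul_finrank_totalDegreeLT (K := K) (initialDegree h)
  have dim_k := two_mul_finrank_totalDegreeLT (K := K) (initialDegree k)
  have dim_hk := two_mul_finrank_totalDegreeLT (K := K) (initialDegree h + initialDegree k)
  nlinarith

theorem injective_pairMap_of_isHomogeneous {σ : Type*} {T U : MvPolynomial σ K} {a b : ℕ}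
    (hT : T.IsHomogeneous (a + 1)) (hU : U.IsHomogeneous (b + 1)) (hT0 : T ≠ 0) (hU0 : U ≠ 0)
    (hcoprime : IsRelPrime T U) : Function.Injective
      (pairMap T U (homogeneousSubmodule σ K b) (homogeneousSubmodule σ K a)) := by
  refine (injective_iff_map_eq_zero _).2 fun x hx => ?_
  have hr := homogeneousSubmodule_le_totalDegreeLT (lt_add_one b) x.1.2
  have hs := homogeneousSubmodule_le_totalDegreeLT (lt_add_one a) x.2.2
  rw [← initialForm_eq_of_isHomogeneous hT, ← initialForm_eq_of_isHomogeneous hU] at hcoprime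
  rw [← initialDegree_eq_of_isHomogeneous hU hU0] at hr
  rw [← initialDegree_eq_of_isHomogeneous hT hT0] at hs
  obtain ⟨hr, hs⟩ := eq_zero_and_eq_zero_of_mul_add_mul_mem hT0 hU0 hcoprime hr hs
    (by rw [← pairMap_apply, hx]; exact zero_mem _)
  exact Prod.ext (Subtype.ext hr) (Subtype.ext hs)

theorem range_pairMap_eq_homogeneousSubmodule {T U : MvPolynomial (Fin 2) K} {a b : ℕ}
    (hT : T.IsHomogeneous (a + 1)) (hU : U.IsHomogeneous (b + 1)) (hT0 : T ≠ 0) (hU0 : U ≠ 0)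
    (hcoprime : IsRelPrime T U) :
    LinearMap.range (pairMap T U (homogeneousSubmodule (Fin 2) K b)
      (homogeneousSubmodule (Fin 2) K a)) = homogeneousSubmodule (Fin 2) K (a + b + 1) := by
  apply Submodule.eq_of_le_of_finrank_eq
  · rintro _ ⟨x, rfl⟩
    have hrT := IsHomogeneous.mul x.1.2 hT
    have hsU := IsHomogeneous.mul x.2.2 hU
    rw [show b + (a + 1) = a + b + 1 by ring] at hrT
    rw [show a + (b + 1) = a + b + 1 by ring] at hsU
    rw [pairMap_apply]
    exact hrT.add hsU
  · rw [LinearMap.finrank_range_of_inj (injective_pairMap_of_isHomogeneous hT hU hT0 hU0 hcoprime),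
      Module.finrank_prod]
    simp only [finrank_homogeneousSubmodule]
    ring

theorem sub_initialForm_mem {σ : Type*} (p : MvPolynomial σ K) :
    p - initialForm p ∈ idealOfVars σ K ^ (initialDegree p + 1) := by
  refine mem_idealOfVars_pow_iff.2 fun m hm => ?_
  rw [map_sub, homogeneousComponent_of_mem (initialForm_isHomogeneous p)]
  split_ifs with hm'
  · rw [hm', initialForm, sub_self]
  · rw [homogeneousComponent_eq_zero_of_lt_initialDegree (by omega), sub_zero]

theorem homogeneousSubmodule_le_idealOfVars_pow {σ : Type*} (n : ℕ) :
    homogeneousSubmodule σ K n ≤ (idealOfVars σ K ^ n).restrictScalars K := by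
  intro p hp
  refine mem_idealOfVars_pow_iff.2 fun m hm => ?_
  rw [homogeneousComponent_of_mem hp, if_neg hm.ne]

theorem idealOfVars_pow_le_span_pair_sup {a b : ℕ} (ha : initialDegree h = a + 1)
    (hb : initialDegree k = b + 1) (hcoprime : IsRelPrime (initialForm h) (initialForm k)) :
    idealOfVars (Fin 2) K ^ (a + b + 1) ≤
      Ideal.span {h, k} ⊔ idealOfVars (Fin 2) K ^ (a + b + 2) := by
  have hh : h ≠ 0 := by rintro rfl; simp [initialDegree] at ha
  have hk : k ≠ 0 := by rintro rfl; simp [initialDegree] at hb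
  rw [pow_idealOfVars_eq_span, Ideal.span_le]
  rintro _ ⟨m, hm, rfl⟩
  have hmono : monomial m (1 : K) ∈ homogeneousSubmodule (Fin 2) K (a + b + 1) :=
    isHomogeneous_monomial _ hm
  rw [← range_pairMap_eq_homogeneousSubmodule (ha ▸ initialForm_isHomogeneous h)
    (hb ▸ initialForm_isHomogeneous k) (initialForm_ne_zero hh) (initialForm_ne_zero hk)
    hcoprime] at hmono
  obtain ⟨⟨⟨r, hr⟩, ⟨s, hs⟩⟩, hrs⟩ := hmono
  have hsplit : monomial m (1 : K) = (r * h + s * k) -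
      (r * (h - initialForm h) + s * (k - initialForm k)) := by
    rw [← hrs, pairMap_apply]; ring
  change monomial m (1 : K) ∈ _
  rw [hsplit]
  refine sub_mem (Ideal.mem_sup_left (Ideal.mem_span_pair.2 ⟨r, s, rfl⟩))
    (Ideal.mem_sup_right (add_mem ?_ ?_))
  · have := Ideal.mul_mem_mul (homogeneousSubmodule_le_idealOfVars_pow b hr)
      (sub_initialForm_mem h)
    rwa [← pow_add, ha, show b + (a + 1 + 1) = a + b + 2 by ring] at this
  · have := Ideal.mul_mem_mul (homogeneousSubmodule_le_idealOfVars_pow a hs)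
      (sub_initialForm_mem k)
    rwa [← pow_add, hb, show a + (b + 1 + 1) = a + b + 2 by ring] at this

theorem eval_zero_ne_zero_of_initialDegree_eq_zero {σ : Type*} {p : MvPolynomial σ K}
    (hp : p ≠ 0) (hdeg : initialDegree p = 0) : eval 0 p ≠ 0 := by
  have := initialForm_ne_zero hp
  rwa [initialForm, hdeg, homogeneousComponent_zero, Ne, C_eq_zero, ← constantCoeff_eq,
    ← eval_zero] at this

theorem eval_zero_eq_zero_of_mem_idealOfVars {σ : Type*} {p : MvPolynomial σ K}
    (hp : p ∈ idealOfVars σ K) : eval 0 p = 0 := by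
  rw [← pow_one (idealOfVars σ K), mem_pow_idealOfVars_iff'] at hp
  rw [eval_zero, constantCoeff_eq]
  exact hp 0 (by simp)

/-- Locally at the origin, the ideal `(h, k)` contains a power of the maximal ideal. -/
theorem exists_eval_zero_ne_zero_and_mul_mem_span_pair (hh : h ≠ 0) (hk : k ≠ 0)
    (hcoprime : IsRelPrime (initialForm h) (initialForm k)) :
    ∃ c : MvPolynomial (Fin 2) K, eval 0 c ≠ 0 ∧
      ∀ w ∈ idealOfVars (Fin 2) K ^ (initialDegree h + initialDegree k),
        c * w ∈ Ideal.span {h, k} := by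
  rcases ha : initialDegree h with _ | a
  · exact ⟨h, eval_zero_ne_zero_of_initialDegree_eq_zero hh ha,
      fun w _ => Ideal.mul_mem_right _ _ (Ideal.subset_span (by simp))⟩
  rcases hb : initialDegree k with _ | b
  · exact ⟨k, eval_zero_ne_zero_of_initialDegree_eq_zero hk hb,
      fun w _ => Ideal.mul_mem_right _ _ (Ideal.subset_span (by simp))⟩
  have hle : idealOfVars (Fin 2) K ^ (a + b + 1) ≤
      Ideal.span {h, k} ⊔ idealOfVars (Fin 2) K • idealOfVars (Fin 2) K ^ (a + b + 1) := by
    rw [smul_eq_mul, ← pow_succ']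
    exact idealOfVars_pow_le_span_pair_sup ha hb hcoprime
  obtain ⟨c, hc, hcle⟩ := Submodule.exists_sub_one_mem_and_smul_le_of_fg_of_le_sup
    (IsNoetherian.noetherian _) le_rfl hle
  refine ⟨c, ?_, fun w hw => hcle (Submodule.smul_mem_pointwise_smul _ c _
    (Ideal.pow_le_pow_right (by omega) hw))⟩
  have := eval_zero_eq_zero_of_mem_idealOfVars hc
  rw [map_sub, map_one, sub_eq_zero] at this
  exact this ▸ one_ne_zero

theorem exists_submodule_finrank_quotient_le_at_zero (hh : h ≠ 0) (hk : k ≠ 0)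
    (hcoprime : IsRelPrime (initialForm h) (initialForm k)) :
    ∃ J : Submodule K (MvPolynomial (Fin 2) K),
      FiniteDimensional K (MvPolynomial (Fin 2) K ⧸ J) ∧
      Module.finrank K (MvPolynomial (Fin 2) K ⧸ J) ≤ initialDegree h * initialDegree k ∧
      ∀ F ∈ J, ∃ c, eval 0 c ≠ 0 ∧ c * F ∈ Ideal.span {h, k} := by
  obtain ⟨c, hc, hcmem⟩ := exists_eval_zero_ne_zero_and_mul_mem_span_pair hh hk hcoprime
  refine ⟨_, ?_, finrank_quotient_sup_range_pairMap_le hh hk hcoprime, fun F hF => ⟨c, hc, ?_⟩⟩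
  · exact Module.Finite.equiv (Submodule.quotientQuotientEquivQuotient _ _ le_sup_left)
  · obtain ⟨w, hw, y, hy, rfl⟩ := Submodule.mem_sup.1 hF
    rw [mul_add]
    exact add_mem (hcmem w hw) (Ideal.mul_mem_left _ _ (range_pairMap_le _ _ _ _ hy))

end LocalIntersection

section Bezout

section Translate

variable {σ K : Type*} [CommRing K]

/-- The substitution `X i ↦ X i + P i`, which moves the point `P` to the origin. -/
noncomputable def translateEquiv (P : σ → K) : MvPolynomial σ K ≃ₐ[K] MvPolynomial σ K :=
  AlgEquiv.ofAlgHom (aeval fun i => X i + C (P i)) (aeval fun i => X i - C (P i))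
    (by ext i; simp) (by ext i; simp)

theorem translateEquiv_X (P : σ → K) (i : σ) : translateEquiv P (X i) = X i + C (P i) := by
  simp [translateEquiv]

theorem eval_translateEquiv (P Q : σ → K) (p : MvPolynomial σ K) :
    eval Q (translateEquiv P p) = eval (Q + P) p := by
  have : ((aeval Q : MvPolynomial σ K →ₐ[K] K).comp
      (translateEquiv P : MvPolynomial σ K →ₐ[K] MvPolynomial σ K)) = aeval (Q + P) := by
    ext i; simp [translateEquiv_X]
  simpa [aeval_eq_eval] using DFunLike.congr_fun this p

/-- The multiplicity of the point `P` on the hypersurface `p = 0`. -/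
noncomputable def multiplicityAt (P : σ → K) (p : MvPolynomial σ K) : ℕ :=
  initialDegree (translateEquiv P p)

/-- The equation of the tangent cone at `P` of the hypersurface `p = 0`, in coordinates
centered at `P`. -/
noncomputable def tangentForm (P : σ → K) (p : MvPolynomial σ K) : MvPolynomial σ K :=
  initialForm (translateEquiv P p)

end Translate

variable {K : Type*} [Field K] {h k : MvPolynomial (Fin 2) K}

theorem exists_submodule_finrank_quotient_le (P : Fin 2 → K) (hh : h ≠ 0) (hk : k ≠ 0)
    (hcoprime : IsRelPrime (tangentForm P h) (tangentForm P k)) :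
    ∃ J : Submodule K (MvPolynomial (Fin 2) K),
      FiniteDimensional K (MvPolynomial (Fin 2) K ⧸ J) ∧
      Module.finrank K (MvPolynomial (Fin 2) K ⧸ J) ≤ multiplicityAt P h * multiplicityAt P k ∧
      ∀ F ∈ J, ∃ c, eval P c ≠ 0 ∧ c * F ∈ Ideal.span {h, k} := by
  obtain ⟨J, _, hJ, hlocal⟩ := exists_submodule_finrank_quotient_le_at_zero
    ((map_ne_zero_iff _ (translateEquiv P).injective).2 hh)
    ((map_ne_zero_iff _ (translateEquiv P).injective).2 hk) hcoprime
  let e := Submodule.Quotient.equiv (J.comap (translateEquiv P).toLinearMap) J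
    (translateEquiv P).toLinearEquiv
    (Submodule.map_comap_eq_of_surjective (translateEquiv P).surjective J)
  refine ⟨_, Module.Finite.equiv e.symm, e.finrank_eq.trans_le hJ, fun F hF => ?_⟩
  obtain ⟨c, hc, hcF⟩ := hlocal _ hF
  refine ⟨(translateEquiv P).symm c, ?_, ?_⟩
  · have := eval_translateEquiv P 0 ((translateEquiv P).symm c)
    rw [AlgEquiv.apply_symm_apply, zero_add] at this
    rwa [← this]
  · obtain ⟨r, s, hrs⟩ := Ideal.mem_span_pair.1 hcF
    refine Ideal.mem_span_pair.2 ⟨(translateEquiv P).symm r, (translateEquiv P).symm s, ?_⟩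
    simpa using congrArg (translateEquiv P).symm hrs

theorem mem_of_forall_exists_eval_ne_zero {σ : Type*} [Finite σ] [IsAlgClosed K]
    {I : Ideal (MvPolynomial σ K)} {F : MvPolynomial σ K}
    (hlocal : ∀ P : σ → K, (∀ p ∈ I, eval P p = 0) → ∃ c, eval P c ≠ 0 ∧ c * F ∈ I) : F ∈ I := by
  let T : Ideal (MvPolynomial σ K) :=
    Submodule.comap (LinearMap.toSpanSingleton (MvPolynomial σ K) _ F) I
  have mem_T : ∀ c, c ∈ T ↔ c * F ∈ I := fun c => Iff.rfl
  suffices T = ⊤ by simpa [mem_T] using (Ideal.eq_top_iff_one T).1 this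
  by_contra hT
  obtain ⟨M, hM, hTM⟩ := Ideal.exists_le_maximal T hT
  obtain ⟨P, rfl⟩ := isMaximal_iff_eq_vanishingIdeal_singleton.1 hM
  have hzero : ∀ c, c * F ∈ I → eval P c = 0 := fun c hc => by
    simpa [mem_vanishingIdeal_singleton_iff, aeval_eq_eval] using hTM ((mem_T c).2 hc)
  obtain ⟨c, hc, hcF⟩ := hlocal P fun p hp => hzero p (I.mul_mem_right F hp)
  exact hc (hzero c hcF)

theorem totalDegree_mul_totalDegree_le_sum_finrank_quotient {ι : Type*} {s : Finset ι}
    (hh : h ≠ 0) (hk : k ≠ 0) (htop : IsRelPrime (topForm h) (topForm k))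
    (J : ι → Submodule K (MvPolynomial (Fin 2) K))
    [∀ i, FiniteDimensional K (MvPolynomial (Fin 2) K ⧸ J i)]
    (hJ : ⨅ i ∈ s, J i ≤ (Ideal.span {h, k}).restrictScalars K) :
    h.totalDegree * k.totalDegree ≤
      ∑ i ∈ s, Module.finrank K (MvPolynomial (Fin 2) K ⧸ J i) := by
  have hbound := finrank_le_finrank_inf_add_sum s
    (totalDegreeLT (Fin 2) K (h.totalDegree + k.totalDegree - 1)).subtype J
  have hker : ((⨅ i ∈ s, J i).comap
      (totalDegreeLT (Fin 2) K (h.totalDegree + k.totalDegree - 1)).subtype).map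
        (totalDegreeLT (Fin 2) K (h.totalDegree + k.totalDegree - 1)).subtype ≤
      LinearMap.range (pairMap h k (totalDegreeLT (Fin 2) K (k.totalDegree - 1))
        (totalDegreeLT (Fin 2) K (h.totalDegree - 1))) := by
    rintro _ ⟨⟨F, hdeg⟩, hF, rfl⟩
    obtain ⟨r, hr, s, hs, hrs⟩ := exists_mem_totalDegreeLT_of_mem_span_pair hh hk htop
      (hJ hF) hdeg
    exact ⟨(⟨r, hr⟩, ⟨s, hs⟩), (pairMap_apply _ _ _ _ _).trans hrs⟩
  have hkernel := (Submodule.finrank_mono hker).trans (LinearMap.finrank_range_le _)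
  rw [Module.finrank_prod, Submodule.finrank_map_subtype_eq] at hkernel
  have dim_h := two_mul_finrank_totalDegreeLT (K := K) (h.totalDegree - 1)
  have dim_k := two_mul_finrank_totalDegreeLT (K := K) (k.totalDegree - 1)
  have dim_hk := two_mul_finrank_totalDegreeLT (K := K) (h.totalDegree + k.totalDegree - 1)
  rcases Nat.eq_zero_or_eq_succ_pred h.totalDegree with ha | ha
  · simp [ha]
  rcases Nat.eq_zero_or_eq_succ_pred k.totalDegree with hb | hb
  · simp [hb]
  generalize h.totalDegree.pred = a at ha
  generalize k.totalDegree.pred = b at hb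
  rw [ha] at dim_h
  rw [hb] at dim_k
  rw [ha, hb] at dim_hk hbound hkernel
  simp only [ha, hb, Nat.succ_eq_add_one, Nat.add_sub_cancel] at *
  rw [show a + 1 + (b + 1) - 1 = a + b + 1 by omega] at *
  nlinarith

/-- A form of Bezout's theorem: each intersection multiplicity is replaced by the product of the
multiplicities, to which it is equal because there are no common tangents. -/
theorem totalDegree_mul_totalDegree_le_sum_multiplicityAt [IsAlgClosed K] (hh : h ≠ 0) (hk : k ≠ 0)
    (htop : IsRelPrime (topForm h) (topForm k)) {S : Finset (Fin 2 → K)}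
    (hS : ∀ P, eval P h = 0 → eval P k = 0 → P ∈ S)
    (htangent : ∀ P ∈ S, IsRelPrime (tangentForm P h) (tangentForm P k)) :
    h.totalDegree * k.totalDegree ≤ ∑ P ∈ S, multiplicityAt P h * multiplicityAt P k := by
  choose J hfinite hJle hlocal using fun P : S =>
    exists_submodule_finrank_quotient_le (P : Fin 2 → K) hh hk (htangent P P.2)
  have hspan : ⨅ P ∈ Finset.univ, J P ≤ (Ideal.span {h, k}).restrictScalars K := by
    refine fun F hF => mem_of_forall_exists_eval_ne_zero fun P hP => ?_
    have hPS : P ∈ S := hS P (hP h (Ideal.subset_span (by simp)))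
      (hP k (Ideal.subset_span (by simp)))
    exact hlocal ⟨P, hPS⟩ F (by simp_all)
  refine (totalDegree_mul_totalDegree_le_sum_finrank_quotient hh hk htop J hspan).trans ?_
  rw [← Finset.sum_coe_sort S]
  exact Finset.sum_le_sum fun P _ => hJle P

end Bezout

section Averaging

theorem card_mul_sum_offDiag_le {ι : Type*} (s : Finset ι) (f : ι → ℕ) :
    s.card * ∑ p ∈ s.offDiag, f p.1 * f p.2 ≤ (s.card - 1) * (∑ i ∈ s, f i) ^ 2 := by
  classical
  rcases s.eq_empty_or_nonempty with rfl | hs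
  · simp
  have hsplit : (∑ i ∈ s, f i) ^ 2 = ∑ i ∈ s, f i ^ 2 + ∑ p ∈ s.offDiag, f p.1 * f p.2 := by
    rw [sq, Finset.sum_mul_sum, ← Finset.sum_product', ← Finset.diag_union_offDiag,
      Finset.sum_union (Finset.disjoint_diag_offDiag s), Finset.sum_diag]
    simp only [sq]
  obtain ⟨r, hr⟩ := Nat.exists_eq_succ_of_ne_zero hs.card_pos.ne'
  have hcauchy := sq_sum_le_card_mul_sum_sq (s := s) (f := f)
  rw [hr] at hcauchy ⊢
  simp only [Nat.succ_eq_add_one, Nat.add_sub_cancel] at hcauchy ⊢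
  nlinarith

theorem sq_card_mul_le_card_mul_sq {ι α : Type*} {s : Finset ι} {S : Finset α} {m : α → ι → ℕ}
    {d M : ℕ} (hs : s.Nontrivial)
    (hpair : ∀ i ∈ s, ∀ j ∈ s, i ≠ j → d * d ≤ ∑ P ∈ S, m P i * m P j)
    (hsum : ∀ P ∈ S, ∑ i ∈ s, m P i ≤ M) : (s.card * d) ^ 2 ≤ S.card * M ^ 2 := by
  classical
  have hcard := Finset.one_lt_card_iff_nontrivial.2 hs
  refine Nat.le_of_mul_le_mul_left ?_ (Nat.sub_pos_of_lt hcard)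
  calc (s.card - 1) * (s.card * d) ^ 2
      = s.card * ∑ _p ∈ s.offDiag, d * d := by
        rw [Finset.sum_const, Finset.offDiag_card, smul_eq_mul, ← Nat.mul_sub_one]; ring
    _ ≤ s.card * ∑ p ∈ s.offDiag, ∑ P ∈ S, m P p.1 * m P p.2 := by
        gcongr with p hp
        obtain ⟨hi, hj, hij⟩ := Finset.mem_offDiag.1 hp
        exact hpair _ hi _ hj hij
    _ = ∑ P ∈ S, s.card * ∑ p ∈ s.offDiag, m P p.1 * m P p.2 := by
        rw [Finset.sum_comm, Finset.mul_sum]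
    _ ≤ ∑ P ∈ S, (s.card - 1) * M ^ 2 := by
        refine Finset.sum_le_sum fun P hP => (card_mul_sum_offDiag_le s (m P)).trans ?_
        gcongr
        exact hsum P hP
    _ = (s.card - 1) * (S.card * M ^ 2) := by
        rw [Finset.sum_const, smul_eq_mul]; ring

end Averaging

section ConjugateFactors

variable {σ k K : Type*} [Field k] [Field K] [Algebra k K]

theorem finite_range_mapAlgEquiv [Algebra.IsAlgebraic k K] (p : MvPolynomial σ K) :
    (Set.range fun τ : Gal(K/k) => mapAlgEquiv σ τ p).Finite := by
  let E := IntermediateField.adjoin k (p.coeffs : Set K)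
  have : FiniteDimensional k E := IntermediateField.finiteDimensional_adjoin fun x _ =>
    Algebra.IsIntegral.isIntegral x
  obtain ⟨p', hp'⟩ : p ∈ Set.range (map (algebraMap E K)) :=
    mem_range_map_iff_coeffs_subset.2 fun x hx =>
      ⟨⟨x, IntermediateField.subset_adjoin k _ hx⟩, rfl⟩
  refine (Set.finite_range fun φ : E →ₐ[k] K => map (φ : E →+* K) p').subset ?_
  rintro _ ⟨τ, rfl⟩
  refine ⟨(τ : K →ₐ[k] K).comp E.val, ?_⟩
  simp only [mapAlgEquiv_apply, ← hp', map_map]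
  rfl

theorem mem_range_map_of_forall_mapAlgEquiv_eq [IsGalois k K] {p : MvPolynomial σ K}
    (hp : ∀ τ : Gal(K/k), mapAlgEquiv σ τ p = p) : p ∈ Set.range (map (algebraMap k K)) := by
  refine mem_range_map_iff_coeffs_subset.2 fun x hx => ?_
  obtain ⟨s, -, rfl⟩ := mem_coeffs_iff.1 hx
  refine (InfiniteGalois.mem_range_algebraMap_iff_fixed _).2 fun τ => ?_
  nth_rw 2 [← hp τ]
  rw [mapAlgEquiv_apply, coeff_map]
  rfl

theorem exists_associated_coeff_eq_one {p : MvPolynomial σ K} (hp : p ≠ 0) :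
    ∃ q s, Associated p q ∧ coeff s q = 1 := by
  obtain ⟨s, hs⟩ := ne_zero_iff.1 hp
  refine ⟨C (coeff s p)⁻¹ * p, s, associated_unit_mul_right p _ ?_, ?_⟩
  · exact (isUnit_iff_ne_zero.2 (inv_ne_zero hs)).map C
  · rw [coeff_C_mul, inv_mul_cancel₀ hs]

theorem eq_of_associated_of_coeff_eq_one {p q : MvPolynomial σ K} {s : σ →₀ ℕ}
    (hpq : Associated p q) (hp : coeff s p = 1) (hq : coeff s q = 1) : p = q := by
  obtain ⟨u, rfl⟩ := hpq
  obtain ⟨c, -, hc⟩ := isUnit_iff_eq_C_of_isReduced.1 u.isUnit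
  rw [hc, mul_comm, coeff_C_mul, hp, mul_one] at hq
  rw [hc, hq, C_1, mul_one]

theorem mapAlgEquiv_map_algebraMap (p : MvPolynomial σ k) (τ : Gal(K/k)) :
    mapAlgEquiv σ τ (map (algebraMap k K) p) = map (algebraMap k K) p := by
  rw [mapAlgEquiv_apply, map_map]
  congr 2
  exact τ.toAlgHom.comp_algebraMap

theorem dvd_of_map_algebraMap_dvd_map [IsGalois k K] {p q : MvPolynomial σ k}
    (hdvd : map (algebraMap k K) p ∣ map (algebraMap k K) q) : p ∣ q := by
  have hinj : Function.Injective (map (σ := σ) (algebraMap k K)) :=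
    map_injective _ (algebraMap k K).injective
  obtain ⟨r, hr⟩ := hdvd
  rcases eq_or_ne p 0 with rfl | hp
  · rw [map_zero, zero_mul, ← map_zero (map (algebraMap k K))] at hr
    rw [hinj hr]
  obtain ⟨r', rfl⟩ := mem_range_map_of_forall_mapAlgEquiv_eq (p := r) fun τ => by
    refine mul_left_cancel₀ ((map_ne_zero_iff _ hinj).2 hp) ?_
    rw [← hr, ← mapAlgEquiv_map_algebraMap q τ, hr, map_mul, mapAlgEquiv_map_algebraMap]
  exact ⟨r', hinj (by rw [hr, map_mul])⟩

variable (k) in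
/-- The set of images of `p` under the Galois group of `K / k` acting on coefficients. -/
noncomputable def conjugates [Algebra.IsAlgebraic k K] (p : MvPolynomial σ K) :
    Finset (MvPolynomial σ K) :=
  (finite_range_mapAlgEquiv (k := k) p).toFinset

theorem mem_conjugates [Algebra.IsAlgebraic k K] {p q : MvPolynomial σ K} :
    q ∈ conjugates k p ↔ ∃ τ : Gal(K/k), mapAlgEquiv σ τ p = q := by
  simp [conjugates]

variable (k) in
theorem mem_conjugates_self [Algebra.IsAlgebraic k K] (p : MvPolynomial σ K) :
    p ∈ conjugates k p :=
  mem_conjugates.2 ⟨AlgEquiv.refl, by simp⟩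

theorem mapAlgEquiv_mem_conjugates_iff [Algebra.IsAlgebraic k K] {p q : MvPolynomial σ K}
    (τ : Gal(K/k)) : mapAlgEquiv σ τ q ∈ conjugates k p ↔ q ∈ conjugates k p := by
  simp only [mem_conjugates]
  constructor
  · rintro ⟨υ, hυ⟩
    refine ⟨υ.trans τ.symm, ?_⟩
    rw [← mapAlgEquiv_trans, ← mapAlgEquiv_symm, AlgEquiv.trans_apply, hυ,
      AlgEquiv.symm_apply_apply]
  · rintro ⟨υ, rfl⟩
    exact ⟨υ.trans τ, by rw [← mapAlgEquiv_trans, AlgEquiv.trans_apply]⟩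

theorem prod_conjugates_mem_range_map [IsGalois k K] (p : MvPolynomial σ K) :
    ∏ q ∈ conjugates k p, q ∈ Set.range (map (algebraMap k K)) := by
  refine mem_range_map_of_forall_mapAlgEquiv_eq fun τ => ?_
  rw [map_prod]
  exact Finset.prod_bijective _ (mapAlgEquiv σ τ).bijective
    (fun q => (mapAlgEquiv_mem_conjugates_iff τ).symm) fun _ _ => rfl

theorem prod_conjugates_dvd_map [Algebra.IsAlgebraic k K] {p : MvPolynomial σ K}
    {g : MvPolynomial σ k} {m : σ →₀ ℕ} (hp : Irreducible p) (hm : coeff m p = 1)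
    (hdvd : p ∣ map (algebraMap k K) g) :
    ∏ q ∈ conjugates k p, q ∣ map (algebraMap k K) g := by
  have hcoeff (τ : Gal(K/k)) : coeff m (mapAlgEquiv σ τ p) = 1 := by
    rw [mapAlgEquiv_apply, coeff_map, hm, map_one]
  have hirr (τ : Gal(K/k)) : Irreducible (mapAlgEquiv σ τ p) :=
    (MulEquiv.irreducible_iff (mapAlgEquiv σ τ)).2 hp
  refine Finset.prod_dvd_of_isRelPrime ?_ ?_
  · intro q hq r hr hne
    obtain ⟨τ, rfl⟩ := mem_conjugates.1 hq
    obtain ⟨υ, rfl⟩ := mem_conjugates.1 hr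
    exact (hirr τ).isRelPrime_iff_not_dvd.2 fun hdvd =>
      hne (eq_of_associated_of_coeff_eq_one ((hirr τ).associated_of_dvd (hirr υ) hdvd)
        (hcoeff τ) (hcoeff υ))
  · intro q hq
    obtain ⟨τ, rfl⟩ := mem_conjugates.1 hq
    rw [← mapAlgEquiv_map_algebraMap g τ]
    exact map_dvd _ hdvd

theorem exists_prod_conjugates_associated_map [IsGalois k K] {g : MvPolynomial σ k}
    (hg : Irreducible g) : ∃ p : MvPolynomial σ K, Irreducible p ∧
      Associated (∏ q ∈ conjugates k p, q) (map (algebraMap k K) g) := by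
  have hinj : Function.Injective (map (σ := σ) (algebraMap k K)) :=
    map_injective _ (algebraMap k K).injective
  have not_isUnit : ¬ IsUnit (map (algebraMap k K) g) := fun hunit => by
    rw [isUnit_iff_dvd_one, ← map_one (map (algebraMap k K))] at hunit
    exact hg.not_isUnit (isUnit_of_dvd_one (dvd_of_map_algebraMap_dvd_map hunit))
  obtain ⟨q, hq, hqg⟩ := WfDvdMonoid.exists_irreducible_factor not_isUnit
    ((map_ne_zero_iff _ hinj).2 hg.ne_zero)
  obtain ⟨p, m, hqp, hm⟩ := exists_associated_coeff_eq_one hq.ne_zero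
  have hp : Irreducible p := hqp.irreducible hq
  have hprod := prod_conjugates_dvd_map hp hm (hqp.dvd_iff_dvd_left.1 hqg)
  have hp_dvd : p ∣ ∏ q ∈ conjugates k p, q :=
    Finset.dvd_prod_of_mem _ (mem_conjugates_self k p)
  obtain ⟨G, hG⟩ := prod_conjugates_mem_range_map (k := k) p
  rw [← hG] at hprod hp_dvd
  have hGg : G ∣ g := dvd_of_map_algebraMap_dvd_map hprod
  refine ⟨p, hp, hG ▸ (hg.dvd_iff.1 hGg).elim (fun hunit => ?_) fun hassoc => ?_⟩
  · exact absurd (isUnit_of_dvd_unit hp_dvd (hunit.map _)) hp.not_isUnit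
  · exact hassoc.symm.map _

theorem totalDegree_eq_of_mem_conjugates [Algebra.IsAlgebraic k K] {p q : MvPolynomial σ K}
    (hq : q ∈ conjugates k p) : q.totalDegree = p.totalDegree := by
  obtain ⟨τ, rfl⟩ := mem_conjugates.1 hq
  rw [mapAlgEquiv_apply, totalDegree, totalDegree,
    support_map_of_injective _ (RingHomClass.toRingHom τ).injective]

theorem totalDegree_prod_conjugates_le [Algebra.IsAlgebraic k K] (p : MvPolynomial σ K) :
    (∏ q ∈ conjugates k p, q).totalDegree ≤ (conjugates k p).card * p.totalDegree :=
  (totalDegree_finsetProd _ _).trans (Finset.sum_le_card_nsmul _ _ _ fun _ hq =>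
    (totalDegree_eq_of_mem_conjugates hq).le)

theorem totalDegree_eq_of_associated {p q : MvPolynomial σ K} (h : Associated p q) :
    p.totalDegree = q.totalDegree := by
  rcases eq_or_ne p 0 with rfl | hp
  · rw [h.eq_zero_iff.1 rfl]
  · exact le_antisymm (totalDegree_le_of_dvd_of_isDomain h.dvd (h.ne_zero_iff.1 hp))
      (totalDegree_le_of_dvd_of_isDomain h.symm.dvd hp)

end ConjugateFactors

section PowerForms

section Derivations

variable {σ R : Type*}

theorem pderiv_pow_succ_of_even [CommSemiring R] [CharP R 2] (j : σ) {n : ℕ} (hn : Even n)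
    (p : MvPolynomial σ R) : pderiv j (p ^ (n + 1)) = p ^ n * pderiv j p := by
  have hcast : (n : MvPolynomial σ R) = 0 := (CharP.cast_eq_zero_iff _ 2 n).2 hn.two_dvd
  rw [Derivation.leibniz_pow, nsmul_eq_mul, Nat.cast_succ, hcast, zero_add, one_mul,
    Nat.add_sub_cancel, smul_eq_mul]

theorem dvd_pderiv_of_mul_self_dvd [CommSemiring R] {p q : MvPolynomial σ R} (h : p * p ∣ q)
    (j : σ) : p ∣ pderiv j q := by
  obtain ⟨c, rfl⟩ := h
  rw [Derivation.leibniz, Derivation.leibniz]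
  simp only [smul_eq_mul]
  exact ⟨p * pderiv j c + c * (pderiv j p + pderiv j p), by ring⟩

theorem isRelPrime_X_X [CommRing R] [IsDomain R] {i j : σ} (hij : i ≠ j) :
    IsRelPrime (X i : MvPolynomial σ R) (X j) :=
  ((X_prime (i := i)).irreducible.isRelPrime_iff_not_dvd).2 fun h => hij (X_dvd_X.1 h)

end Derivations

/-- The form `a x ^ (n + 1) + b y ^ (n + 1) + c (x + y) ^ (n + 1)`. Both the leading form and the
tangent cones of the curves studied below have this shape. -/
noncomputable def powerForm {R : Type*} [CommSemiring R] (n : ℕ) (a b c : R) :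
    MvPolynomial (Fin 2) R :=
  C a * X 0 ^ (n + 1) + C b * X 1 ^ (n + 1) + C c * (X 0 + X 1) ^ (n + 1)

theorem isHomogeneous_X_add_X {σ R : Type*} [CommSemiring R] (i j : σ) :
    (X i + X j : MvPolynomial σ R).IsHomogeneous 1 :=
  (isHomogeneous_X R i).add (isHomogeneous_X R j)

theorem powerForm_isHomogeneous {R : Type*} [CommSemiring R] (n : ℕ) (a b c : R) :
    (powerForm n a b c).IsHomogeneous (n + 1) := by
  have hpow {L : MvPolynomial (Fin 2) R} (hL : L.IsHomogeneous 1) (r : R) :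
      (C r * L ^ (n + 1)).IsHomogeneous (n + 1) := by
    simpa only [one_mul] using (hL.pow (n + 1)).C_mul r
  exact ((hpow (isHomogeneous_X R 0) a).add (hpow (isHomogeneous_X R 1) b)).add
    (hpow (isHomogeneous_X_add_X 0 1) c)

section CharTwo

variable {R K : Type*} [CommSemiring R] [CharP R 2] [Field K] [CharP K 2] {n : ℕ}

theorem pderiv_zero_powerForm (hn : Even n) (a b c : R) :
    pderiv 0 (powerForm n a b c) = C a * X 0 ^ n + C c * (X 0 + X 1) ^ n := by
  simp [powerForm, pderiv_pow_succ_of_even _ hn,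
    pderiv_X_of_ne (show (1 : Fin 2) ≠ 0 by decide)]

theorem pderiv_one_powerForm (hn : Even n) (a b c : R) :
    pderiv 1 (powerForm n a b c) = C b * X 1 ^ n + C c * (X 0 + X 1) ^ n := by
  simp [powerForm, pderiv_pow_succ_of_even _ hn,
    pderiv_X_of_ne (show (0 : Fin 2) ≠ 1 by decide)]

theorem powerForm_one_ne_zero [Nontrivial R] (hn : Even n) (hn0 : n ≠ 0) :
    powerForm n (1 : R) 1 1 ≠ 0 := by
  intro h
  have hpderiv := pderiv_zero_powerForm hn (1 : R) 1 1
  rw [h, map_zero] at hpderiv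
  simpa [hn0] using congrArg (eval ![0, 1]) hpderiv

theorem isUnit_of_mul_self_dvd_powerForm_one (hn : Even n) {p : MvPolynomial (Fin 2) K}
    (hsq : p * p ∣ powerForm n 1 1 1) (hp : p ∣ (X 0 + X 1) ^ n) : IsUnit p := by
  have hzero := dvd_pderiv_of_mul_self_dvd hsq 0
  have hone := dvd_pderiv_of_mul_self_dvd hsq 1
  rw [pderiv_zero_powerForm hn, C_1, one_mul, one_mul, dvd_add_left hp] at hzero
  rw [pderiv_one_powerForm hn, C_1, one_mul, one_mul, dvd_add_left hp] at hone
  exact (isRelPrime_X_X zero_ne_one).pow hzero hone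

theorem squarefree_powerForm {i : ℕ} (hi : i ≠ 0) {a b c : K} (h : a * b + a * c + b * c ≠ 0) :
    Squarefree (powerForm (2 ^ i) a b c) := by
  intro p hsq
  have heven : Even (2 ^ i) := Nat.even_pow.2 ⟨even_two, hi⟩
  have htwo : (2 : MvPolynomial (Fin 2) K) = 0 := CharTwo.two_eq_zero
  have hzero := dvd_pderiv_of_mul_self_dvd hsq 0
  have hone := dvd_pderiv_of_mul_self_dvd hsq 1
  rw [pderiv_zero_powerForm heven, add_pow_char_pow] at hzero
  rw [pderiv_one_powerForm heven, add_pow_char_pow] at hone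
  -- The partial derivatives are linear forms in `x ^ 2 ^ i` and `y ^ 2 ^ i` of determinant
  -- `a * b + a * c + b * c`; Cramer's rule recovers these two powers.
  have hdet : IsUnit (C (a * b + a * c + b * c) : MvPolynomial (Fin 2) K) :=
    (isUnit_iff_ne_zero.2 h).map C
  have hX : p ∣ X 0 ^ 2 ^ i := by
    rw [← hdet.dvd_mul_left]
    convert dvd_add (hzero.mul_left (C (b + c))) (hone.mul_left (C c)) using 1
    simp only [C_add, C_mul]
    linear_combination (-(C c * C c * X 0 ^ 2 ^ i) - C c * C b * X 1 ^ 2 ^ i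
      - C c * C c * X 1 ^ 2 ^ i) * htwo
  have hY : p ∣ X 1 ^ 2 ^ i := by
    rw [← hdet.dvd_mul_left]
    convert dvd_add (hzero.mul_left (C c)) (hone.mul_left (C (a + c))) using 1
    simp only [C_add, C_mul]
    linear_combination (-(C c * C c * X 0 ^ 2 ^ i) - C c * C a * X 0 ^ 2 ^ i
      - C c * C c * X 1 ^ 2 ^ i) * htwo
  exact (isRelPrime_X_X zero_ne_one).pow hX hY

end CharTwo

end PowerForms

section Curve

/-- The polynomial `f_t = x ^ t + y ^ t + 1 + (x + y + 1) ^ t` whose factor `g_t` is studied; over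
a field of characteristic two it measures how far `x ^ t` is from being almost perfect nonlinear. -/
noncomputable def apnPolynomial (R : Type*) [CommSemiring R] (t : ℕ) : MvPolynomial (Fin 2) R :=
  X 0 ^ t + X 1 ^ t + 1 + (X 0 + X 1 + 1) ^ t

section Infinity

theorem homogeneousComponent_add_one_pow {σ R : Type*} [CommSemiring R] {L : MvPolynomial σ R}
    (hL : L.IsHomogeneous 1) (m t : ℕ) :
    homogeneousComponent m ((L + 1) ^ t) = L ^ m * (t.choose m : MvPolynomial σ R) := by
  have hterm (j : ℕ) : homogeneousComponent m (L ^ j * (t.choose j : MvPolynomial σ R)) =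
      if m = j then L ^ j * (t.choose j : MvPolynomial σ R) else 0 := by
    have hj : (L ^ j * (t.choose j : MvPolynomial σ R)).IsHomogeneous j := by
      simpa using (hL.pow j).mul (isHomogeneous_C σ (t.choose j : R))
    rw [homogeneousComponent_of_mem hj]
  simp only [add_pow, one_pow, mul_one, map_sum, hterm, Finset.sum_ite_eq, Finset.mem_range]
  split_ifs with hm
  · rfl
  · rw [Nat.choose_eq_zero_of_lt (by omega), Nat.cast_zero, mul_zero]

theorem homogeneousComponent_apnPolynomial {R : Type*} [CommSemiring R] {m : ℕ} (hm : m ≠ 0)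
    (t : ℕ) : homogeneousComponent m (apnPolynomial R t) =
      (if m = t then X 0 ^ t + X 1 ^ t else 0) +
        (X 0 + X 1) ^ m * (t.choose m : MvPolynomial (Fin 2) R) := by
  have hXY : (X 0 ^ t + X 1 ^ t : MvPolynomial (Fin 2) R).IsHomogeneous t := by
    simpa using ((isHomogeneous_X R 0).pow t).add ((isHomogeneous_X R 1).pow t)
  rw [apnPolynomial, map_add, map_add, homogeneousComponent_of_mem hXY,
    homogeneousComponent_of_mem (isHomogeneous_one _ _), if_neg hm, add_zero,
    homogeneousComponent_add_one_pow (isHomogeneous_X_add_X 0 1)]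

theorem totalDegree_apnPolynomial_and_topForm {R : Type*} [CommSemiring R] [Nontrivial R]
    [CharP R 2] {n : ℕ} (hn : Even n) (hn0 : n ≠ 0) :
    (apnPolynomial R (n + 1)).totalDegree = n + 1 ∧
      topForm (apnPolynomial R (n + 1)) = powerForm n 1 1 1 := by
  have htop : homogeneousComponent (n + 1) (apnPolynomial R (n + 1)) = powerForm n 1 1 1 := by
    simp [homogeneousComponent_apnPolynomial, powerForm]
  have hdeg : (apnPolynomial R (n + 1)).totalDegree = n + 1 := by
    refine totalDegree_eq_of_gt (fun m hm => ?_) (htop ▸ powerForm_one_ne_zero hn hn0)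
    rw [homogeneousComponent_apnPolynomial (by omega), if_neg (by omega),
      Nat.choose_eq_zero_of_lt hm, Nat.cast_zero, mul_zero, add_zero]
  exact ⟨hdeg, by rw [topForm, hdeg, htop]⟩

theorem dvd_homogeneousComponent_mul {σ R : Type*} [CommSemiring R] {n : ℕ}
    {d p q : MvPolynomial σ R} (hp : d ∣ topForm p) (hq : d ∣ topForm q)
    (hdeg : p.totalDegree + q.totalDegree ≤ n + 1) : d ∣ homogeneousComponent n (p * q) := by
  rw [homogeneousComponent_mul_eq_sum_antidiagonal]
  refine Finset.dvd_sum fun ij hij => ?_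
  rw [Finset.HasAntidiagonal.mem_antidiagonal] at hij
  rcases lt_trichotomy ij.1 p.totalDegree with hlt | heq | hgt
  · rcases (show q.totalDegree ≤ ij.2 by omega).eq_or_lt with heq | hgt
    · exact heq ▸ hq.mul_left _
    · rw [homogeneousComponent_eq_zero _ _ hgt, mul_zero]
      exact dvd_zero d
  · exact heq ▸ hp.mul_right _
  · rw [homogeneousComponent_eq_zero _ _ hgt, zero_mul]
    exact dvd_zero d

variable {K : Type*} [Field K] [CharP K 2] {n : ℕ}

theorem apnPolynomial_ne_zero (hn : Even n) (hn0 : n ≠ 0) : apnPolynomial K (n + 1) ≠ 0 := by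
  intro h
  have hdeg := (totalDegree_apnPolynomial_and_topForm (R := K) hn hn0).1
  simp [h] at hdeg

theorem isRelPrime_topForm_of_mul_eq_apnPolynomial (hn : Even n) (hn0 : n ≠ 0)
    {p q : MvPolynomial (Fin 2) K} (h : p * q = apnPolynomial K (n + 1)) :
    IsRelPrime (topForm p) (topForm q) := by
  obtain ⟨hdeg, htop⟩ := totalDegree_apnPolynomial_and_topForm (R := K) hn hn0
  have hpq : p * q ≠ 0 := h ▸ apnPolynomial_ne_zero hn hn0
  rw [← h] at hdeg htop
  rw [totalDegree_mul_of_isDomain (left_ne_zero_of_mul hpq) (right_ne_zero_of_mul hpq)] at hdeg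
  intro d hdp hdq
  have hsq : d * d ∣ powerForm n 1 1 1 := by
    rw [← htop, topForm_mul]
    exact mul_dvd_mul hdp hdq
  have hsub := dvd_homogeneousComponent_mul hdp hdq hdeg.le
  have hodd : ((n + 1 : ℕ) : MvPolynomial (Fin 2) K) = 1 := by
    rw [Nat.cast_succ, (CharP.cast_eq_zero_iff _ 2 n).2 hn.two_dvd, zero_add]
  rw [h, homogeneousComponent_apnPolynomial hn0, if_neg (by omega), zero_add,
    Nat.choose_succ_self_right, hodd, mul_one] at hsub
  exact isUnit_of_mul_self_dvd_powerForm_one hn hsq hsub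

theorem isRelPrime_topForm_of_mul_dvd_apnPolynomial (hn : Even n) (hn0 : n ≠ 0)
    {p q : MvPolynomial (Fin 2) K} (h : p * q ∣ apnPolynomial K (n + 1)) :
    IsRelPrime (topForm p) (topForm q) := by
  obtain ⟨r, hr⟩ := h
  have hrel : IsRelPrime (topForm p) (topForm (q * r)) :=
    isRelPrime_topForm_of_mul_eq_apnPolynomial hn hn0 (by rw [hr, mul_assoc])
  rw [topForm_mul] at hrel
  exact hrel.of_mul_right_left

end Infinity

section LocalExpansion

theorem pow_two_pow_sq_dvd_add_pow_sub {R : Type*} [CommRing R] [CharP R 2] {i l : ℕ} (hl : Odd l)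
    {a b : R} (hab : a * b = 1) (hal : a ^ l = 1) (haq : a ^ 2 ^ i = a) (u : R) :
    (u ^ 2 ^ i) ^ 2 ∣ (u + a) ^ (2 ^ i * l + 1) - (u + a + u ^ 2 ^ i + b * u ^ (2 ^ i + 1)) := by
  obtain ⟨k, hk⟩ := Polynomial.powAddExpansion a (u ^ 2 ^ i) l
  have hodd : (l : R) = 1 := by simp [CharTwo.natCast_eq_ite, Nat.not_even_iff_odd.2 hl]
  have hpred : a ^ (l - 1) = b := by
    obtain ⟨m, rfl⟩ := hl
    have : a ^ (2 * m) * a = 1 := by rw [← pow_succ, hal]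
    rw [Nat.add_sub_cancel]
    linear_combination b * this - a ^ (2 * m) * hab
  rw [hal, hpred, hodd, one_mul] at hk
  refine ⟨k * (u + a), ?_⟩
  rw [pow_succ (u + a), pow_mul, add_pow_char_pow, haq, add_comm (u ^ 2 ^ i), hk]
  linear_combination u ^ 2 ^ i * hab

theorem add_C_pow_sub_mem_idealOfVars_pow {σ K : Type*} [Field K] [CharP K 2] {i l : ℕ}
    (hi : i ≠ 0) (hl : Odd l) {α : K} (hαl : α ^ l = 1) (hαq : α ^ 2 ^ i = α)
    {u : MvPolynomial σ K} (hu : u ∈ idealOfVars σ K) :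
    (u + C α) ^ (2 ^ i * l + 1) - (u + C α + u ^ 2 ^ i + C α⁻¹ * u ^ (2 ^ i + 1)) ∈
      idealOfVars σ K ^ (2 ^ i + 1 + 1) := by
  have hα : α ≠ 0 := by
    rintro rfl
    simp [hl.pos.ne'] at hαl
  have hdvd := pow_two_pow_sq_dvd_add_pow_sub (i := i) hl (a := C α) (b := C α⁻¹)
    (by rw [← C_mul, mul_inv_cancel₀ hα, C_1]) (by rw [← C_pow, hαl, C_1])
    (by rw [← C_pow, hαq]) u
  refine Ideal.mem_of_dvd _ hdvd (Ideal.pow_le_pow_right ?_ (pow_mul u (2 ^ i) 2 ▸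
    Ideal.pow_mem_pow hu (2 ^ i * 2)))
  have : 2 ≤ 2 ^ i := Nat.le_self_pow hi 2
  omega

theorem translateEquiv_apnPolynomial {R : Type*} [CommRing R] (P : Fin 2 → R) (t : ℕ) :
    translateEquiv P (apnPolynomial R t) = (X 0 + C (P 0)) ^ t + (X 1 + C (P 1)) ^ t + 1 +
      (X 0 + X 1 + C (P 0 + P 1 + 1)) ^ t := by
  simp only [apnPolynomial, map_add, map_pow, map_one, translateEquiv_X]
  ring

variable {K : Type*} [Field K] [CharP K 2]

theorem inv_mul_inv_add_add_ne_zero {α β γ : K} (hα : α ≠ 0) (hβ : β ≠ 0) (hγ : γ ≠ 0)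
    (h : γ = α + β + 1) : α⁻¹ * β⁻¹ + α⁻¹ * γ⁻¹ + β⁻¹ * γ⁻¹ ≠ 0 := by
  have htwo : (2 : K) = 0 := CharTwo.two_eq_zero
  have heq : α⁻¹ * β⁻¹ + α⁻¹ * γ⁻¹ + β⁻¹ * γ⁻¹ = (α * β * γ)⁻¹ := by
    field_simp
    rw [h]
    linear_combination (α + β) * htwo
  rw [heq]
  exact inv_ne_zero (mul_ne_zero (mul_ne_zero hα hβ) hγ)

theorem translateEquiv_apnPolynomial_sub_mem {i l : ℕ} (hi : i ≠ 0) (hl : Odd l)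
    (hdvd : l ∣ 2 ^ i - 1) {P : Fin 2 → K} (hx : P 0 ^ l = 1) (hy : P 1 ^ l = 1)
    (hz : (P 0 + P 1 + 1) ^ l = 1) :
    translateEquiv P (apnPolynomial K (2 ^ i * l + 1)) -
        powerForm (2 ^ i) (P 0)⁻¹ (P 1)⁻¹ (P 0 + P 1 + 1)⁻¹ ∈
      idealOfVars (Fin 2) K ^ (2 ^ i + 1 + 1) := by
  have hfix {α : K} (hα : α ^ l = 1) : α ^ 2 ^ i = α := by
    obtain ⟨m, hm⟩ := hdvd
    rw [show 2 ^ i = l * m + 1 by have := Nat.two_pow_pos i; omega, pow_succ, pow_mul, hα,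
      one_pow, one_mul]
  have hX (j : Fin 2) : (X j : MvPolynomial (Fin 2) K) ∈ idealOfVars (Fin 2) K :=
    Ideal.subset_span ⟨j, rfl⟩
  have hsum := add_mem (add_mem (add_C_pow_sub_mem_idealOfVars_pow hi hl hx (hfix hx) (hX 0))
    (add_C_pow_sub_mem_idealOfVars_pow hi hl hy (hfix hy) (hX 1)))
    (add_C_pow_sub_mem_idealOfVars_pow hi hl hz (hfix hz) (add_mem (hX 0) (hX 1)))
  convert hsum using 1
  have htwo : (2 : MvPolynomial (Fin 2) K) = 0 := CharTwo.two_eq_zero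
  rw [translateEquiv_apnPolynomial, powerForm, add_pow_char_pow (X 0) (X 1)]
  simp only [C_add, C_1]
  linear_combination
    (X 0 + X 1 + C (P 0) + C (P 1) + X 0 ^ 2 ^ i + X 1 ^ 2 ^ i + 1) * htwo

end LocalExpansion

end Curve

section SingularPoints

theorem even_card_of_involutive {α : Type*} {s : Finset α} {f : α → α}
    (hf : Function.Involutive f) (hmem : ∀ a ∈ s, f a ∈ s) (hne : ∀ a ∈ s, f a ≠ a) :
    Even s.card := by
  have hsum : ∑ _a ∈ s, (1 : ZMod 2) = 0 :=
    Finset.sum_involution (fun a _ => f a) (fun _ _ => by decide) (fun a ha _ => hne a ha) hmem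
      fun a _ => hf a
  rwa [Finset.sum_const, nsmul_one, ZMod.natCast_eq_zero_iff_even] at hsum

section Definition

variable {K : Type*} [Field K] {l : ℕ}

open Classical in
variable (K) in
/-- The points `(x, y)` at which `x`, `y` and `x + y + 1` are `l`-th roots of unity. In
characteristic two these are the singular points of `f_t` for `t = 2 ^ i * l + 1`. -/
noncomputable def singularPoints (l : ℕ) : Finset (Fin 2 → K) :=
  {P ∈ Fintype.piFinset fun _ => Polynomial.nthRootsFinset l 1 | (P 0 + P 1 + 1) ^ l = 1}

theorem mem_singularPoints (hl : 0 < l) {P : Fin 2 → K} :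
    P ∈ singularPoints K l ↔ P 0 ^ l = 1 ∧ P 1 ^ l = 1 ∧ (P 0 + P 1 + 1) ^ l = 1 := by
  simp [singularPoints, Polynomial.mem_nthRootsFinset hl, Fin.forall_fin_two, and_assoc]

theorem card_nthRootsFinset_le (l : ℕ) (a : K) : (Polynomial.nthRootsFinset l a).card ≤ l := by
  classical
  rw [Polynomial.nthRootsFinset_def]
  exact (Multiset.toFinset_card_le _).trans (Polynomial.card_nthRoots l a)

open Classical in
theorem card_singularPoints_fiber_le (hl : 0 < l) (a : K) :
    {P ∈ singularPoints K l | P 0 = a}.card ≤ l := by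
  refine (Finset.card_le_card_of_injOn (fun P => P 1) (fun P hP => ?_) ?_).trans
    (card_nthRootsFinset_le l (1 : K))
  · rw [Finset.coe_filter, Set.mem_ofPred_eq, mem_singularPoints hl] at hP
    exact (Polynomial.mem_nthRootsFinset hl 1).2 hP.1.2.1
  · intro P hP Q hQ hPQ
    rw [Finset.coe_filter, Set.mem_ofPred_eq] at hP hQ
    ext j
    fin_cases j
    · exact hP.2.trans hQ.2.symm
    · exact hPQ

end Definition

variable {K : Type*} [Field K] [CharP K 2]

open Classical in
theorem card_singularPoints_fiber_le_pred {l : ℕ} (hl : Odd l) {a : K} (ha : a ≠ 1) :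
    {P ∈ singularPoints K l | P 0 = a}.card ≤ l - 1 := by
  have htwo : (2 : K) = 0 := CharTwo.two_eq_zero
  have hinv (x y : K) : x + (x + y + 1) + 1 = y := by linear_combination (x + 1) * htwo
  have heven : Even {P ∈ singularPoints K l | P 0 = a}.card := by
    refine even_card_of_involutive (f := fun P => ![P 0, P 0 + P 1 + 1]) (fun P => ?_)
      (fun P hP => ?_) fun P hP hfix => ha ?_
    · ext j
      fin_cases j <;> simp [hinv]
    · simp only [Finset.mem_filter, mem_singularPoints hl.pos] at hP ⊢
      obtain ⟨⟨hx, hy, hz⟩, rfl⟩ := hP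
      exact ⟨⟨hx, hz, by simpa [hinv] using hy⟩, rfl⟩
    · have hsnd : P 0 + P 1 + 1 = P 1 := congrFun hfix 1
      rw [← (Finset.mem_filter.1 hP).2]
      linear_combination hsnd - htwo
  refine Nat.le_pred_of_lt ((card_singularPoints_fiber_le hl.pos a).lt_of_ne fun heq => ?_)
  exact Nat.not_even_iff_odd.2 hl (heq ▸ heven)

theorem card_singularPoints_le {l : ℕ} (hl : Odd l) :
    (singularPoints K l).card ≤ l + (l - 1) * (l - 1) := by
  classical
  rw [Finset.card_eq_sum_card_fiberwise (f := fun P => P 0)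
    (t := Polynomial.nthRootsFinset l (1 : K)) fun P hP =>
      (Polynomial.mem_nthRootsFinset hl.pos 1).2 ((mem_singularPoints hl.pos).1 hP).1,
    ← Finset.add_sum_erase _ _ (Polynomial.one_mem_nthRootsFinset hl.pos)]
  refine add_le_add (card_singularPoints_fiber_le hl.pos 1) ((Finset.sum_le_card_nsmul _ _ _
    fun a ha => card_singularPoints_fiber_le_pred hl (Finset.ne_of_mem_erase ha)).trans ?_)
  rw [smul_eq_mul, Finset.card_erase_of_mem (Polynomial.one_mem_nthRootsFinset hl.pos)]
  exact Nat.mul_le_mul_right _ (Nat.sub_le_sub_right (card_nthRootsFinset_le l 1) 1)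

theorem eval_pderiv_eq_zero_of_mul_dvd {σ R : Type*} [CommSemiring R] {p q f : MvPolynomial σ R}
    (h : p * q ∣ f) {P : σ → R} (hp : eval P p = 0) (hq : eval P q = 0) (j : σ) :
    eval P (pderiv j f) = 0 := by
  obtain ⟨r, rfl⟩ := h
  simp [Derivation.leibniz, hp, hq]

variable {i l : ℕ}

theorem mem_singularPoints_of_mul_dvd (hi : i ≠ 0) (hl : 0 < l) {p q : MvPolynomial (Fin 2) K}
    (h : p * q ∣ apnPolynomial K (2 ^ i * l + 1)) {P : Fin 2 → K} (hp : eval P p = 0)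
    (hq : eval P q = 0) : P ∈ singularPoints K l := by
  have htwo : (2 : K) = 0 := CharTwo.two_eq_zero
  have heven : Even (2 ^ i * l) := (Nat.even_pow.2 ⟨even_two, hi⟩).mul_right l
  have hdx := eval_pderiv_eq_zero_of_mul_dvd h hp hq 0
  have hdy := eval_pderiv_eq_zero_of_mul_dvd h hp hq 1
  have hf : eval P (apnPolynomial K (2 ^ i * l + 1)) = 0 :=
    zero_dvd_iff.1 (by simpa [hp] using map_dvd (eval P) h)
  simp only [apnPolynomial, map_add, pderiv_pow_succ_of_even _ heven, pderiv_one, pderiv_X_self,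
    pderiv_X_of_ne (show (1 : Fin 2) ≠ 0 by decide), map_pow, eval_X, map_one,
    pderiv_X_of_ne (show (0 : Fin 2) ≠ 1 by decide), add_zero, zero_add, mul_one, mul_zero]
    at hdx hdy hf
  have hz : (P 0 + P 1 + 1) ^ (2 ^ i * l) = 1 := by
    linear_combination hf - P 0 * hdx - P 1 * hdy - htwo
  have hx : P 0 ^ (2 ^ i * l) = 1 := by linear_combination hdx - hz - htwo
  have hy : P 1 ^ (2 ^ i * l) = 1 := by linear_combination hdy - hz - htwo
  rw [ExpChar.pow_prime_pow_mul_eq_one_iff] at hx hy hz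
  exact (mem_singularPoints hl).2 ⟨hx, hy, hz⟩

theorem multiplicityAt_apnPolynomial_and_squarefree_tangentForm (hi : i ≠ 0) (hl : Odd l)
    (hdvd : l ∣ 2 ^ i - 1) {P : Fin 2 → K} (hP : P ∈ singularPoints K l) :
    multiplicityAt P (apnPolynomial K (2 ^ i * l + 1)) = 2 ^ i + 1 ∧
      Squarefree (tangentForm P (apnPolynomial K (2 ^ i * l + 1))) := by
  obtain ⟨hx, hy, hz⟩ := (mem_singularPoints hl.pos).1 hP
  have hne {α : K} (hα : α ^ l = 1) : α ≠ 0 := by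
    rintro rfl
    simp [hl.pos.ne'] at hα
  have hsq := squarefree_powerForm hi (inv_mul_inv_add_add_ne_zero (hne hx) (hne hy) (hne hz) rfl)
  have hhom := powerForm_isHomogeneous (2 ^ i) (P 0)⁻¹ (P 1)⁻¹ (P 0 + P 1 + 1)⁻¹
  have hdeg := initialDegree_eq_of_isHomogeneous hhom hsq.ne_zero
  obtain ⟨hmult, hform⟩ := initialDegree_eq_and_initialForm_eq_of_sub_mem hsq.ne_zero
    (hdeg ▸ translateEquiv_apnPolynomial_sub_mem hi hl hdvd hx hy hz)
  rw [initialForm_eq_of_isHomogeneous hhom] at hform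
  exact ⟨hmult.trans hdeg, by rwa [tangentForm, hform]⟩

theorem tangentForm_mul {σ R : Type*} [CommRing R] [NoZeroDivisors R] (P : σ → R)
    (p q : MvPolynomial σ R) : tangentForm P (p * q) = tangentForm P p * tangentForm P q := by
  rw [tangentForm, map_mul, initialForm_mul, tangentForm, tangentForm]

theorem isRelPrime_tangentForm_of_mul_dvd (hi : i ≠ 0) (hl : Odd l) (hdvd : l ∣ 2 ^ i - 1)
    {p q : MvPolynomial (Fin 2) K} (h : p * q ∣ apnPolynomial K (2 ^ i * l + 1)) {P : Fin 2 → K}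
    (hP : P ∈ singularPoints K l) : IsRelPrime (tangentForm P p) (tangentForm P q) := by
  obtain ⟨r, hr⟩ := h
  have hsq := (multiplicityAt_apnPolynomial_and_squarefree_tangentForm hi hl hdvd hP).2
  rw [hr, tangentForm_mul, tangentForm_mul] at hsq
  exact (squarefree_mul_iff.1 hsq.of_mul_left).1

end SingularPoints

section Multiplicity

variable {σ R : Type*} [CommRing R] [IsDomain R]

theorem multiplicityAt_mul (P : σ → R) {p q : MvPolynomial σ R} (hp : p ≠ 0) (hq : q ≠ 0) :
    multiplicityAt P (p * q) = multiplicityAt P p + multiplicityAt P q := by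
  rw [multiplicityAt, map_mul, initialDegree_mul
    ((map_ne_zero_iff _ (translateEquiv P).injective).2 hp)
    ((map_ne_zero_iff _ (translateEquiv P).injective).2 hq), multiplicityAt, multiplicityAt]

theorem sum_multiplicityAt_le_of_prod_dvd {ι : Type*} {s : Finset ι} {p : ι → MvPolynomial σ R}
    {f : MvPolynomial σ R} (hf : f ≠ 0) (h : ∏ j ∈ s, p j ∣ f) (P : σ → R) :
    ∑ j ∈ s, multiplicityAt P (p j) ≤ multiplicityAt P f := by
  classical
  induction s using Finset.induction_on generalizing f with
  | empty => simp
  | insert j s hj ih =>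
    rw [Finset.prod_insert hj] at h
    obtain ⟨r, rfl⟩ := h
    rw [mul_assoc] at hf
    rw [mul_assoc, multiplicityAt_mul P (left_ne_zero_of_mul hf) (right_ne_zero_of_mul hf),
      Finset.sum_insert hj]
    exact Nat.add_le_add_left (ih (right_ne_zero_of_mul hf) (dvd_mul_right _ r)) _

end Multiplicity

section Arithmetic

variable {i l : ℕ}

theorem odd_of_dvd_two_pow_sub_one (hi : i ≠ 0) (hdvd : l ∣ 2 ^ i - 1) : Odd l :=
  (Nat.Even.sub_odd Nat.one_le_two_pow (Nat.even_pow.2 ⟨even_two, hi⟩) odd_one).of_dvd_nat hdvd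

theorem three_mul_add_one_le_two_pow (hi : i ≠ 0) (hdvd : l ∣ 2 ^ i - 1) (hne : l ≠ 2 ^ i - 1) :
    3 * l + 1 ≤ 2 ^ i := by
  have hodd : Odd (2 ^ i - 1) := odd_of_dvd_two_pow_sub_one hi dvd_rfl
  obtain ⟨m, hm⟩ := hdvd
  have hm_odd : Odd m := by
    rw [hm] at hodd
    exact (Nat.odd_mul.1 hodd).2
  have hm_ne : m ≠ 1 := by
    rintro rfl
    exact hne (by rw [hm, mul_one])
  have hm_ge : 3 ≤ m := by
    obtain ⟨j, rfl⟩ := hm_odd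
    omega
  have hpos := Nat.two_pow_pos i
  have := Nat.mul_le_mul_left l hm_ge
  omega

theorem sixteen_le_two_pow (h : 9 ≤ 2 ^ i) : 16 ≤ 2 ^ i := by
  have hi : 3 < i := (Nat.pow_lt_pow_iff_right one_lt_two).1 (by omega : 2 ^ 3 < 2 ^ i)
  exact Nat.pow_le_pow_right two_pos hi

theorem add_sq_mul_sq_lt {q : ℕ} (hl : 3 ≤ l) (hq : 16 ≤ q) (hlq : 3 * l + 1 ≤ q) :
    (l + (l - 1) * (l - 1)) * (q + 1) ^ 2 < (q * l - 2) ^ 2 := by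
  obtain ⟨m, rfl⟩ := Nat.exists_eq_add_of_le' hl
  have hlinear : 4 * m ^ 2 + 29 * m + 54 ≤ 2 * q * (m + 2) := by
    rcases le_or_gt m 1 with hm | hm
    · interval_cases m <;> omega
    · nlinarith
  have hsub : 2 ≤ q * (m + 3) := by nlinarith
  rw [show m + 3 - 1 = m + 2 by omega]
  zify [hsub] at hlinear hlq ⊢
  nlinarith [mul_le_mul_of_nonneg_left hlinear (Nat.cast_nonneg (α := ℤ) q)]

end Arithmetic

section AbsoluteIrreducibility

variable {K : Type*} [Field K] [CharP K 2] {i l : ℕ}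

theorem sq_card_mul_le_of_prod_dvd_apnPolynomial [IsAlgClosed K] (hi : i ≠ 0) (hl : Odd l)
    (hdvd : l ∣ 2 ^ i - 1) {s : Finset (MvPolynomial (Fin 2) K)} (hs : s.Nontrivial) {d : ℕ}
    (hdeg : ∀ p ∈ s, p.totalDegree = d) (hprod : ∏ p ∈ s, p ∣ apnPolynomial K (2 ^ i * l + 1)) :
    (s.card * d) ^ 2 ≤ (l + (l - 1) * (l - 1)) * (2 ^ i + 1) ^ 2 := by
  classical
  have heven : Even (2 ^ i * l) := (Nat.even_pow.2 ⟨even_two, hi⟩).mul_right l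
  have hf0 := apnPolynomial_ne_zero (K := K) heven (by have := hl.pos; positivity)
  refine (sq_card_mul_le_card_mul_sq (m := fun P p => multiplicityAt P p) hs
    (fun p hp q hq hpq => ?_) fun P hP => ?_).trans
      (Nat.mul_le_mul_right _ (card_singularPoints_le (K := K) hl))
  · have hpair : p * q ∣ apnPolynomial K (2 ^ i * l + 1) := by
      rw [← Finset.prod_pair hpq (f := fun p => p)]
      exact (Finset.prod_dvd_prod_of_subset _ _ _ (by grind)).trans hprod
    have hpq0 := ne_zero_of_dvd_ne_zero hf0 hpair
    have hbezout := totalDegree_mul_totalDegree_le_sum_multiplicityAt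
      (left_ne_zero_of_mul hpq0) (right_ne_zero_of_mul hpq0)
      (isRelPrime_topForm_of_mul_dvd_apnPolynomial heven (by have := hl.pos; positivity) hpair)
      (fun P => mem_singularPoints_of_mul_dvd hi hl.pos hpair)
      fun P => isRelPrime_tangentForm_of_mul_dvd hi hl hdvd hpair
    rwa [hdeg p hp, hdeg q hq] at hbezout
  · rw [← (multiplicityAt_apnPolynomial_and_squarefree_tangentForm hi hl hdvd hP).1]
    exact sum_multiplicityAt_le_of_prod_dvd hf0 hprod P

omit [CharP K 2] in
theorem totalDegree_lines_le :
    ((X 0 + 1) * (X 1 + 1) * (X 0 + X 1) : MvPolynomial (Fin 2) K).totalDegree ≤ 3 := by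
  have hX_add_one (j : Fin 2) : (X j + 1 : MvPolynomial (Fin 2) K).totalDegree ≤ 1 :=
    (totalDegree_add _ _).trans (by simp)
  have hX_add_X : (X 0 + X 1 : MvPolynomial (Fin 2) K).totalDegree ≤ 1 :=
    (totalDegree_add _ _).trans (by simp)
  exact (totalDegree_mul _ _).trans (add_le_add ((totalDegree_mul _ _).trans
    (add_le_add (hX_add_one 0) (hX_add_one 1))) hX_add_X)

theorem totalDegree_ge_of_lines_mul_eq {g : MvPolynomial (Fin 2) K}
    (hg : (X 0 + 1) * (X 1 + 1) * (X 0 + X 1) * g = apnPolynomial K (2 ^ i * l + 1)) (hi : i ≠ 0)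
    (hl : l ≠ 0) : 2 ^ i * l - 2 ≤ g.totalDegree := by
  have hdeg := (totalDegree_apnPolynomial_and_topForm (R := K)
    ((Nat.even_pow.2 ⟨even_two, hi⟩).mul_right l) (by positivity)).1
  have := hdeg ▸ hg ▸ totalDegree_mul ((X 0 + 1) * (X 1 + 1) * (X 0 + X 1)) g
  have := totalDegree_lines_le (K := K)
  omega

end AbsoluteIrreducibility

theorem stmt_16_general {k K : Type*} [Field k] [Field K] [CharP k 2] [Algebra k K] [IsGalois k K]
    [IsAlgClosed K] (i l t : ℕ) (hi : 1 ≤ i) (hl : 3 ≤ l) (ht : t = 2 ^ i * l + 1)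
    (hdvd : l ∣ 2 ^ i - 1) (hne : l ≠ 2 ^ i - 1) (g : MvPolynomial (Fin 2) k)
    (hg : (X 0 + 1) * (X 1 + 1) * (X 0 + X 1) * g =
      X 0 ^ t + X 1 ^ t + 1 + (X 0 + X 1 + 1) ^ t)
    (hirr : Irreducible g) : Irreducible (map (algebraMap k K) g) := by
  subst ht
  have : CharP K 2 := charP_of_injective_algebraMap (algebraMap k K).injective 2
  have hi : i ≠ 0 := by omega
  have hlodd := odd_of_dvd_two_pow_sub_one hi hdvd
  have hlq := three_mul_add_one_le_two_pow hi hdvd hne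
  have hgK : (X 0 + 1) * (X 1 + 1) * (X 0 + X 1) * map (algebraMap k K) g =
      apnPolynomial K (2 ^ i * l + 1) := by
    simpa [apnPolynomial] using congrArg (map (algebraMap k K)) hg
  obtain ⟨p, hp, hassoc⟩ := exists_prod_conjugates_associated_map (K := K) hirr
  rcases (conjugates k p).eq_singleton_or_nontrivial (mem_conjugates_self k p) with hsingle | hs
  · rw [hsingle, Finset.prod_singleton] at hassoc
    exact hassoc.irreducible hp
  · have hupper := sq_card_mul_le_of_prod_dvd_apnPolynomial hi hlodd hdvd hs
      (fun q => totalDegree_eq_of_mem_conjugates) (hassoc.dvd.trans (Dvd.intro_left _ hgK))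
    have hlower : 2 ^ i * l - 2 ≤ (conjugates k p).card * p.totalDegree :=
      (totalDegree_ge_of_lines_mul_eq hgK hi (by omega)).trans
        ((totalDegree_eq_of_associated hassoc).ge.trans (totalDegree_prod_conjugates_le p))
    exact absurd (hupper.trans_lt (add_sq_mul_sq_lt hl (sixteen_le_two_pow (by omega)) hlq))
      (Nat.pow_le_pow_left hlower 2).not_gt

/-- If `t = 2^i ℓ + 1` with `ℓ ∣ 2^i - 1` and `ℓ ≠ 2^i - 1`, and `g_t` is irreducible
over `𝔽₂`, then `g_t` is absolutely irreducible. -/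
theorem stmt_16 (i l t : ℕ) (hi : 1 ≤ i) (hl : 3 ≤ l) (hlodd : Odd l)
    (ht : t = 2 ^ i * l + 1) (hdvd : l ∣ 2 ^ i - 1) (hne : l ≠ 2 ^ i - 1)
    (g : MvPolynomial (Fin 2) (ZMod 2))
    (hg : (X 0 + 1) * (X 1 + 1) * (X 0 + X 1) * g =
      X 0 ^ t + X 1 ^ t + 1 + (X 0 + X 1 + 1) ^ t)
    (hirr : Irreducible g) :
    Irreducible (MvPolynomial.map (algebraMap (ZMod 2) (AlgebraicClosure (ZMod 2))) g) :=
  stmt_16_general i l t hi hl ht hdvd hne g hg hirr
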